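/- arXiv:1201.2344 — 3 statements merged into one kernel-verified Lean document; each statement's English description precedes it below -/
import Mathlib

section
/- Let 𝒞 and 𝒞' be two distinct connected components of the germ-grain surface ω̄, let T be a hole of 𝒞 and T' a hole of 𝒞'. If T is not contained in T' and T' is not contained in T, then the distance between T and T', i.e. the infimum of |t − t'| over t ∈ T and t' ∈ T', is at least 2·R₀. -/
open Metric Set

/-- The germ-grain surface of a finite configuration: the union of the closed balls. -/
def surface (ω : Finset (EuclideanSpace ℝ (Fin 2) × ℝ)) : Set (EuclideanSpace ℝ (Fin 2)) :=
  ⋃ p ∈ ω, Metric.closedBall p.1 p.2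

/-- `C` is a connected component of `S`. -/
def IsCompOf (C S : Set (EuclideanSpace ℝ (Fin 2))) : Prop :=
  ∃ x ∈ S, C = connectedComponentIn S x

/-- `T` is a hole of `S`: a bounded connected component of the complement of `S`. -/
def IsHoleOf (T S : Set (EuclideanSpace ℝ (Fin 2))) : Prop :=
  (∃ t ∈ Sᶜ, T = connectedComponentIn Sᶜ t) ∧ Bornology.IsBounded T

/-!
Two holes that are not nested have disjoint closures: an entanglement of the components and the
holes would produce a nonempty bounded set with empty frontier. Let `a` and `b` be nearest points
of the closures and let `e` be the unit vector from `a` to `b`. Since the first hole cannot be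
pushed towards `b`, every direction within a right angle of `e` is blocked by a grain of `C`
touching `a`; shrinking these grains to radius `R₀`, one finds a ball touching `a` on either side of
the line `ab` such that the heights of the two centers above `a`, measured along `e`, have
nonnegative sum. The same holds at `b` for `-e`. Hence on one side of the line the ball at `a` is
at least as high above `a` as the ball at `b` is above `b`, and if `|a - b| < 2 * R₀` then these
two balls meet, although they lie in the disjoint components `C` and `C'`.
-/

open Filter Topology
open scoped InnerProductSpace

section Components

variable {X : Type*} [TopologicalSpace X]

lemma subset_connectedComponentIn_of_inter_nonempty {F K : Set X} {x : X} (hK : IsPreconnected K)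
    (hKF : K ⊆ F) (hKx : (K ∩ connectedComponentIn F x).Nonempty) :
    K ⊆ connectedComponentIn F x := by
  obtain ⟨y, hyK, hyx⟩ := hKx
  rw [connectedComponentIn_eq hyx]
  exact hK.subset_connectedComponentIn hyK hKF

lemma isClosed_connectedComponentIn {F : Set X} (hF : IsClosed F) (x : X) :
    IsClosed (connectedComponentIn F x) := by
  by_cases hx : x ∈ F
  · rw [← closure_subset_iff_isClosed]
    exact isPreconnected_connectedComponentIn.closure.subset_connectedComponentIn
      (subset_closure (mem_connectedComponentIn hx))
      (closure_minimal (connectedComponentIn_subset F x) hF)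
  · rw [connectedComponentIn_eq_empty hx]
    exact isClosed_empty

lemma frontier_connectedComponentIn_subset_compl [LocallyConnectedSpace X] {U : Set X}
    (hU : IsOpen U) (x : X) : frontier (connectedComponentIn U x) ⊆ Uᶜ := by
  intro y hy hyU
  rw [hU.connectedComponentIn.frontier_eq] at hy
  obtain ⟨z, hzy, hzx⟩ :=
    mem_closure_iff.1 hy.1 _ hU.connectedComponentIn (mem_connectedComponentIn hyU)
  exact hy.2 (subset_connectedComponentIn_of_inter_nonempty isPreconnected_connectedComponentIn
    (connectedComponentIn_subset U y) ⟨z, hzy, hzx⟩ (mem_connectedComponentIn hyU))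

end Components

lemma nonempty_frontier_of_isBounded {E : Type*} [NormedAddCommGroup E] [NormedSpace ℝ E]
    [Nontrivial E] {s : Set E} (hne : s.Nonempty) (hs : Bornology.IsBounded s) :
    (frontier s).Nonempty :=
  nonempty_frontier_iff.2 ⟨hne, fun h => NormedSpace.unbounded_univ ℝ E (h ▸ hs)⟩

lemma exists_dist_le_dist_of_isCompact {X : Type*} [PseudoMetricSpace X] {K L : Set X}
    (hK : IsCompact K) (hL : IsCompact L) (hKne : K.Nonempty) (hLne : L.Nonempty) :
    ∃ a ∈ K, ∃ b ∈ L, ∀ x ∈ K, ∀ y ∈ L, dist a b ≤ dist x y := by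
  obtain ⟨⟨a, b⟩, ⟨ha, hb⟩, hmin⟩ := (hK.prod hL).exists_isMinOn (hKne.prod hLne)
    (f := fun q : X × X => dist q.1 q.2) continuous_dist.continuousOn
  exact ⟨a, ha, b, hb, fun x hx y hy => isMinOn_iff.1 hmin (x, y) ⟨hx, hy⟩⟩

namespace IsCompOf

variable {S C C' : Set (EuclideanSpace ℝ (Fin 2))}

lemma isPreconnected (h : IsCompOf C S) : IsPreconnected C := by
  obtain ⟨x, -, rfl⟩ := h
  exact isPreconnected_connectedComponentIn

lemma subset (h : IsCompOf C S) : C ⊆ S := by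
  obtain ⟨x, -, rfl⟩ := h
  exact connectedComponentIn_subset S x

lemma nonempty (h : IsCompOf C S) : C.Nonempty := by
  obtain ⟨x, hx, rfl⟩ := h
  exact ⟨x, mem_connectedComponentIn hx⟩

lemma isClosed (hS : IsClosed S) (h : IsCompOf C S) : IsClosed C := by
  obtain ⟨x, -, rfl⟩ := h
  exact isClosed_connectedComponentIn hS x

lemma subset_of_inter_nonempty (h : IsCompOf C S) {K : Set (EuclideanSpace ℝ (Fin 2))}
    (hK : IsPreconnected K) (hKS : K ⊆ S) (hKC : (K ∩ C).Nonempty) : K ⊆ C := by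
  obtain ⟨x, -, rfl⟩ := h
  exact subset_connectedComponentIn_of_inter_nonempty hK hKS hKC

lemma disjoint_of_ne (h : IsCompOf C S) (h' : IsCompOf C' S) (hne : C ≠ C') : Disjoint C C' := by
  by_contra hmeet
  rw [not_disjoint_iff_nonempty_inter] at hmeet
  exact hne (Subset.antisymm (h'.subset_of_inter_nonempty h.isPreconnected h.subset hmeet)
    (h.subset_of_inter_nonempty h'.isPreconnected h'.subset (inter_comm C C' ▸ hmeet)))

lemma exists_subset_eq_surface {ω : Finset (EuclideanSpace ℝ (Fin 2) × ℝ)}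
    (h : IsCompOf C (surface ω)) : ∃ σ ⊆ ω, C = surface σ := by
  classical
  refine ⟨ω.filter fun p => closedBall p.1 p.2 ⊆ C, Finset.filter_subset _ _,
    Subset.antisymm (fun x hx => ?_)
      (iUnion₂_subset fun p hp => (Finset.mem_filter.1 hp).2)⟩
  obtain ⟨p, hp, hxp⟩ := mem_iUnion₂.1 (h.subset hx)
  have hpC : closedBall p.1 p.2 ⊆ C :=
    h.subset_of_inter_nonempty (convex_closedBall p.1 p.2).isPreconnected
      (subset_biUnion_of_mem (u := fun p : EuclideanSpace ℝ (Fin 2) × ℝ => closedBall p.1 p.2) hp)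
      ⟨x, hxp, hx⟩
  exact mem_iUnion₂.2 ⟨p, Finset.mem_filter.2 ⟨hp, hpC⟩, hxp⟩

end IsCompOf

lemma isClosed_surface (ω : Finset (EuclideanSpace ℝ (Fin 2) × ℝ)) : IsClosed (surface ω) :=
  isClosed_biUnion_finset fun _ _ => isClosed_closedBall

namespace IsHoleOf

variable {C C' T T' : Set (EuclideanSpace ℝ (Fin 2))}

lemma isCompOf_compl (h : IsHoleOf T C) : IsCompOf T Cᶜ := h.1

lemma isBounded (h : IsHoleOf T C) : Bornology.IsBounded T := h.2

lemma frontier_subset (hC : IsClosed C) (h : IsHoleOf T C) : frontier T ⊆ C := by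
  obtain ⟨⟨x, -, rfl⟩, -⟩ := h
  simpa using frontier_connectedComponentIn_subset_compl hC.isOpen_compl x

lemma closure_subset_union (hC : IsClosed C) (h : IsHoleOf T C) : closure T ⊆ T ∪ C := by
  rw [closure_eq_self_union_frontier]
  exact union_subset_union_right T (h.frontier_subset hC)

lemma isOpen (hC : IsClosed C) (h : IsHoleOf T C) : IsOpen T := by
  obtain ⟨⟨x, -, rfl⟩, -⟩ := h
  exact hC.isOpen_compl.connectedComponentIn

lemma not_subset_hole_of_subset_hole (hC : IsClosed C) (hC' : IsClosed C') (hT : IsHoleOf T C)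
    (hT' : IsHoleOf T' C') (hC'T : C' ⊆ T) : ¬ C ⊆ T' := by
  intro hCT'
  obtain ⟨x, hx⟩ := nonempty_frontier_of_isBounded
    (hT.isCompOf_compl.nonempty.mono subset_union_left) (hT.isBounded.union hT'.isBounded)
  have hxTT' : x ∈ T ∪ T' := by
    rcases closure_union.subset hx.1 with hx | hx
    · exact (hT.closure_subset_union hC hx).imp_right (hCT' ·)
    · exact (hT'.closure_subset_union hC' hx).symm.imp_left (hC'T ·)
  rw [((hT.isOpen hC).union (hT'.isOpen hC')).frontier_eq] at hx
  exact hx.2 hxTT'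

lemma hole_subset_of_subset_hole (hC : IsClosed C) (hC' : IsClosed C') (hCconn : IsPreconnected C)
    (hdisj : Disjoint C C') (hT : IsHoleOf T C) (hT' : IsHoleOf T' C') (hC'T : C' ⊆ T) :
    T' ⊆ T := by
  have hT'C : Disjoint C T' := by
    by_contra hmeet
    exact not_subset_hole_of_subset_hole hC hC' hT hT' hC'T
      (hT'.isCompOf_compl.subset_of_inter_nonempty hCconn hdisj.subset_compl_right
        (not_disjoint_iff_nonempty_inter.1 hmeet))
  obtain ⟨x, hx⟩ := nonempty_frontier_of_isBounded hT'.isCompOf_compl.nonempty hT'.isBounded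
  obtain ⟨y, hyT, hyT'⟩ := mem_closure_iff.1 hx.1 T (hT.isOpen hC)
    (hC'T (hT'.frontier_subset hC' hx))
  exact hT.isCompOf_compl.subset_of_inter_nonempty hT'.isCompOf_compl.isPreconnected
    hT'C.subset_compl_left ⟨y, hyT', hyT⟩

lemma disjoint_hole_of_not_hole_subset (hC : IsClosed C) (hC' : IsClosed C')
    (hCconn : IsPreconnected C) (hC'conn : IsPreconnected C') (hdisj : Disjoint C C')
    (hT : IsHoleOf T C) (hT' : IsHoleOf T' C') (hT'T : ¬ T' ⊆ T) : Disjoint C' T := by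
  by_contra hmeet
  exact hT'T (hT.hole_subset_of_subset_hole hC hC' hCconn hdisj hT'
    (hT.isCompOf_compl.subset_of_inter_nonempty hC'conn hdisj.subset_compl_left
      (not_disjoint_iff_nonempty_inter.1 hmeet)))

lemma disjoint_closure (hC : IsClosed C) (hC' : IsClosed C') (hCconn : IsPreconnected C)
    (hC'conn : IsPreconnected C') (hdisj : Disjoint C C') (hT : IsHoleOf T C)
    (hT' : IsHoleOf T' C') (hTT' : ¬ T ⊆ T') (hT'T : ¬ T' ⊆ T) :
    Disjoint (closure T) (closure T') := by
  have hC'T : Disjoint C' T :=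
    hT.disjoint_hole_of_not_hole_subset hC hC' hCconn hC'conn hdisj hT' hT'T
  have hCT' : Disjoint C T' :=
    hT'.disjoint_hole_of_not_hole_subset hC' hC hC'conn hCconn hdisj.symm hT hTT'
  have hdisjT : Disjoint T T' := by
    by_contra hmeet
    exact hTT' (hT'.isCompOf_compl.subset_of_inter_nonempty hT.isCompOf_compl.isPreconnected
      hC'T.subset_compl_left (not_disjoint_iff_nonempty_inter.1 hmeet))
  refine Disjoint.mono (hT.closure_subset_union hC) (hT'.closure_subset_union hC') ?_
  simp only [disjoint_union_left, disjoint_union_right]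
  exact ⟨⟨hdisjT, hCT'⟩, hC'T.symm, hdisj⟩

end IsHoleOf

section Contact

variable {E : Type*} [NormedAddCommGroup E] [InnerProductSpace ℝ E]

lemma eventually_add_smul_notMem_closedBall {a c v : E} {r : ℝ}
    (h : a ∈ closedBall c r → ⟪v, c - a⟫_ℝ < 0) :
    ∀ᶠ q : E × ℝ in 𝓝 (a, 0), q.1 ∉ closedBall c r → 0 ≤ q.2 →
      q.1 + q.2 • v ∉ closedBall c r := by
  by_cases ha : a ∈ closedBall c r
  · have hcont : Continuous fun q : E × ℝ => ⟪v, c - q.1⟫_ℝ := by fun_prop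
    filter_upwards [hcont.continuousAt.eventually_lt continuousAt_const (h ha)]
      with ⟨t, s⟩ hinner hout hs
    simp only [mem_closedBall, dist_eq_norm, not_le] at hinner hout hs ⊢
    refine hout.trans_le (le_of_sq_le_sq ?_ (norm_nonneg _))
    have hexpand : ‖t + s • v - c‖ ^ 2 = ‖t - c‖ ^ 2 - 2 * s * ⟪v, c - t⟫_ℝ + ‖s • v‖ ^ 2 := by
      rw [show t + s • v - c = (t - c) + s • v by abel, norm_add_sq_real, inner_smul_right,
        real_inner_comm, ← neg_sub c t, inner_neg_right, norm_neg]
      ring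
    nlinarith [mul_nonneg hs (neg_pos.2 hinner).le, sq_nonneg ‖s • v‖]
  · have hcont : Continuous fun q : E × ℝ => q.1 + q.2 • v := by fun_prop
    filter_upwards [hcont.continuousAt.eventually_mem
      (isClosed_closedBall.isOpen_compl.mem_nhds (by simpa using ha))] with q hq _ _ using hq

lemma eventually_dist_add_smul_lt {a b v : E} (hv : 0 < ⟪v, b - a⟫_ℝ) :
    ∀ᶠ s : ℝ in 𝓝[>] 0, dist (a + s • v) b < dist a b := by
  have hcont : Continuous fun s : ℝ => s * ‖v‖ ^ 2 := by fun_prop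
  have hsmall : ∀ᶠ s : ℝ in 𝓝[>] 0, s * ‖v‖ ^ 2 < 2 * ⟪v, b - a⟫_ℝ :=
    nhdsWithin_le_nhds (hcont.continuousAt.eventually_lt continuousAt_const (by simpa using hv))
  filter_upwards [hsmall, self_mem_nhdsWithin] with s hs hpos
  rw [mem_Ioi] at hpos
  rw [dist_comm, dist_comm a, dist_eq_norm, dist_eq_norm]
  refine lt_of_pow_lt_pow_left₀ 2 (norm_nonneg _) ?_
  rw [← sub_sub, norm_sub_sq_real, inner_smul_right, norm_smul, Real.norm_of_nonneg hpos.le,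
    real_inner_comm]
  nlinarith [mul_lt_mul_of_pos_left hs hpos]

variable {S T : Set E} {σ : Finset (E × ℝ)} {a b v x : E} {R : ℝ}

lemma eventually_add_smul_mem_connectedComponentIn (hS : S = ⋃ p ∈ σ, closedBall p.1 p.2)
    (hT : T = connectedComponentIn Sᶜ x)
    (hout : ∀ p ∈ σ, a ∈ closedBall p.1 p.2 → ⟪v, p.1 - a⟫_ℝ < 0) :
    ∀ᶠ s : ℝ in 𝓝[>] 0, ∀ᶠ t in 𝓝[T] a, t + s • v ∈ T := by
  have hpush : ∀ᶠ q : E × ℝ in 𝓝 (a, 0), ∀ p ∈ σ, q.1 ∉ closedBall p.1 p.2 → 0 ≤ q.2 →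
      q.1 + q.2 • v ∉ closedBall p.1 p.2 := by
    rw [eventually_all_finset]
    exact fun p hp => eventually_add_smul_notMem_closedBall (hout p hp)
  obtain ⟨ε, hε, hpush⟩ := Metric.eventually_nhds_iff.1 hpush
  filter_upwards [Ioo_mem_nhdsGT hε] with s hs
  filter_upwards [self_mem_nhdsWithin, nhdsWithin_le_nhds (ball_mem_nhds a hε)] with t ht hta
  have hTS : T ⊆ Sᶜ := hT ▸ connectedComponentIn_subset _ _
  have hsegment : segment ℝ t (t + s • v) ⊆ Sᶜ := by
    intro y hy hyS
    rw [segment_eq_image'] at hy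
    obtain ⟨θ, hθ, rfl⟩ := hy
    rw [hS] at hyS
    obtain ⟨p, hp, hyp⟩ := mem_iUnion₂.1 hyS
    have htp : t ∉ closedBall p.1 p.2 := fun h => hTS ht (hS ▸ mem_iUnion₂.2 ⟨p, hp, h⟩)
    have hθs : 0 ≤ θ * s := mul_nonneg hθ.1 hs.1.le
    have hθsε : θ * s < ε := (mul_le_of_le_one_left hs.1.le hθ.2).trans_lt hs.2
    have hclose : dist (t, θ * s) (a, 0) < ε := by
      rw [Prod.dist_eq, max_lt_iff, Real.dist_0_eq_abs, abs_of_nonneg hθs]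
      exact ⟨hta, hθsε⟩
    refine hpush hclose p hp htp hθs ?_
    simpa only [add_sub_cancel_left, smul_smul] using hyp
  subst hT
  exact subset_connectedComponentIn_of_inter_nonempty (convex_segment t _).isPreconnected hsegment
    ⟨t, left_mem_segment ℝ t _, ht⟩ (right_mem_segment ℝ t _)

-- Otherwise a small translation along `v` would move points of `T` near `a` closer to `b`
-- without leaving `T`.
lemma exists_ball_blocking_of_nearest (hS : S = ⋃ p ∈ σ, closedBall p.1 p.2)
    (hT : T = connectedComponentIn Sᶜ x) (ha : a ∈ closure T)
    (hmin : ∀ t ∈ T, dist a b ≤ dist t b) (hv : 0 < ⟪v, b - a⟫_ℝ) :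
    ∃ p ∈ σ, a ∈ closedBall p.1 p.2 ∧ 0 ≤ ⟪v, p.1 - a⟫_ℝ := by
  by_contra! hout
  obtain ⟨s, hmem, hcloser⟩ := ((eventually_add_smul_mem_connectedComponentIn hS hT hout).and
    (eventually_dist_add_smul_lt hv)).exists
  have hcont : Continuous fun t : E => dist (t + s • v) b := by fun_prop
  have := mem_closure_iff_nhdsWithin_neBot.1 ha
  obtain ⟨t, ht, htcloser⟩ := (hmem.and (nhdsWithin_le_nhds
    (hcont.continuousAt.eventually_lt continuousAt_const hcloser))).exists
  exact (hmin _ ht).not_gt htcloser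

/-- `S` satisfies the interior ball condition at `a` with radius `R` in the unit direction `u`:
the closed ball of radius `R` that touches `a` and has its center in direction `u` lies in `S`. -/
structure IsInnerBallDirection (S : Set E) (a : E) (R : ℝ) (u : E) : Prop where
  norm_eq_one : ‖u‖ = 1
  closedBall_subset : closedBall (a + R • u) R ⊆ S

lemma isInnerBallDirection_of_mem_closure_compl {c : E} {r : ℝ} (hR : 0 < R) (hRr : R ≤ r)
    (hcS : closedBall c r ⊆ S) (ha : a ∈ closedBall c r) (haS : a ∈ closure Sᶜ) :
    IsInnerBallDirection S a R (r⁻¹ • (c - a)) := by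
  have hr : 0 < r := hR.trans_le hRr
  have hdist : ‖c - a‖ = r := by
    rw [← dist_eq_norm, dist_comm]
    refine le_antisymm ha (not_lt.1 fun hlt => ?_)
    rw [closure_compl] at haS
    exact haS (mem_interior.2 ⟨ball c r, ball_subset_closedBall.trans hcS, isOpen_ball, hlt⟩)
  have hunit : ‖r⁻¹ • (c - a)‖ = 1 := by
    rw [norm_smul, hdist, norm_inv, Real.norm_of_nonneg hr.le, inv_mul_cancel₀ hr.ne']
  refine ⟨hunit, (closedBall_subset_closedBall' ?_).trans hcS⟩
  have hcenter : a + R • r⁻¹ • (c - a) - c = (R - r) • r⁻¹ • (c - a) := by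
    rw [sub_smul, smul_inv_smul₀ hr.ne']
    abel
  rw [dist_eq_norm, hcenter, norm_smul, hunit, Real.norm_of_nonpos (sub_nonpos.2 hRr)]
  linarith

end Contact

-- The half-plane of vectors making a non-obtuse angle with `(s, c)` cuts the right half of the unit
-- circle exactly in the points that are at least as high as `(c, -s)`.
lemma neg_le_of_mul_add_mul_nonneg {x y s c : ℝ} (hxy : x ^ 2 + y ^ 2 = 1)
    (hsc : s ^ 2 + c ^ 2 = 1) (hx : 0 ≤ x) (hc : 0 < c) (h : 0 ≤ c * y + s * x) : -s ≤ y := by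
  by_contra! hlt
  rcases le_total 0 s with hs | hs
  · have hxc : x ≤ c := by nlinarith
    nlinarith
  · rcases le_or_gt 0 y with hy | hy
    · have hcx : c ≤ x := by nlinarith
      nlinarith
    · nlinarith

section Plane

variable {E : Type*} [NormedAddCommGroup E] [InnerProductSpace ℝ E]
  [Fact (Module.finrank ℝ E = 2)] (o : Orientation ℝ E (Fin 2)) {e u w : E}

lemma areaForm_sq_add_inner_sq_eq_one (he : ‖e‖ = 1) (hu : ‖u‖ = 1) :
    o.areaForm e u ^ 2 + ⟪e, u⟫_ℝ ^ 2 = 1 := by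
  rw [add_comm, o.inner_sq_add_areaForm_sq, he, hu]
  norm_num

lemma exists_right_or_left_of_blocking {U : Finset E} {s : ℝ} (he : ‖e‖ = 1)
    (hU : ∀ u ∈ U, ‖u‖ = 1) (hblock : ∀ v, 0 < ⟪v, e⟫_ℝ → ∃ u ∈ U, 0 ≤ ⟪v, u⟫_ℝ)
    (hs : |s| < 1) :
    ∃ u ∈ U, (0 ≤ o.areaForm e u ∧ -s ≤ ⟪e, u⟫_ℝ) ∨ (o.areaForm e u ≤ 0 ∧ s ≤ ⟪e, u⟫_ℝ) := by
  obtain ⟨c, hc, hsc⟩ : ∃ c : ℝ, 0 < c ∧ s ^ 2 + c ^ 2 = 1 := by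
    have hpos : 0 < 1 - s ^ 2 := sub_pos.2 ((sq_lt_one_iff_abs_lt_one s).2 hs)
    exact ⟨√(1 - s ^ 2), Real.sqrt_pos.2 hpos, by rw [Real.sq_sqrt hpos.le]; ring⟩
  have hinner : ∀ u, ⟪c • e + s • o.rightAngleRotation e, u⟫_ℝ =
      c * ⟪e, u⟫_ℝ + s * o.areaForm e u := by
    intro u
    rw [inner_add_left, real_inner_smul_left, real_inner_smul_left,
      o.inner_rightAngleRotation_left]
  obtain ⟨u, hu, hvu⟩ := hblock (c • e + s • o.rightAngleRotation e) (by
    rw [hinner, real_inner_self_eq_norm_sq, he, o.areaForm_apply_self]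
    linarith)
  rw [hinner] at hvu
  have hcircle := areaForm_sq_add_inner_sq_eq_one o he (hU u hu)
  refine ⟨u, hu, (le_total 0 (o.areaForm e u)).imp (fun hright => ⟨hright, ?_⟩)
    (fun hleft => ⟨hleft, ?_⟩)⟩
  · exact neg_le_of_mul_add_mul_nonneg hcircle hsc hright hc hvu
  · rw [← neg_sq (o.areaForm e u)] at hcircle
    rw [← neg_sq s] at hsc
    rw [← neg_mul_neg s] at hvu
    simpa only [neg_neg] using
      neg_le_of_mul_add_mul_nonneg hcircle hsc (neg_nonneg.2 hleft) hc hvu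

-- With `e` pointing up, suppose every pair of a left and a right vector has a negative sum of
-- heights. Then some `s` separates the left heights from the negatives of the right ones.
lemma exists_left_right_inner_add_inner_nonneg {U : Finset E} (he : ‖e‖ = 1)
    (hU : ∀ u ∈ U, ‖u‖ = 1) (hblock : ∀ v, 0 < ⟪v, e⟫_ℝ → ∃ u ∈ U, 0 ≤ ⟪v, u⟫_ℝ) :
    ∃ l ∈ U, ∃ r ∈ U, o.areaForm e l ≤ 0 ∧ 0 ≤ o.areaForm e r ∧ 0 ≤ ⟪e, l⟫_ℝ + ⟪e, r⟫_ℝ := by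
  classical
  by_contra! hneg
  have hlt_one : ∀ u ∈ U, ⟪e, u⟫_ℝ < 1 := by
    intro u hu
    by_contra! h
    have hx : o.areaForm e u = 0 := by
      nlinarith [areaForm_sq_add_inner_sq_eq_one o he (hU u hu)]
    linarith [hneg u hu u hu hx.le hx.ge]
  obtain ⟨s, hlow, hhigh⟩ := Order.exists_between_finsets
    (insert (-1) ((U.filter fun u => o.areaForm e u ≤ 0).image fun u => ⟪e, u⟫_ℝ))
    (insert 1 ((U.filter fun u => 0 ≤ o.areaForm e u).image fun u => -⟪e, u⟫_ℝ)) (by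
      simp only [Finset.forall_mem_insert, Finset.forall_mem_image, Finset.mem_filter]
      refine ⟨⟨by norm_num, fun u hu => ?_⟩, fun l hl => ⟨?_, fun r hr => ?_⟩⟩
      · linarith [hlt_one u hu.1]
      · exact hlt_one l hl.1
      · linarith [hneg l hl.1 r hr.1 hl.2 hr.2])
  simp only [Finset.forall_mem_insert, Finset.forall_mem_image, Finset.mem_filter] at hlow hhigh
  obtain ⟨u, hu, ⟨hright, hheight⟩ | ⟨hleft, hheight⟩⟩ :=
    exists_right_or_left_of_blocking o he hU hblock (abs_lt.2 ⟨hlow.1, hhigh.1⟩)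
  · linarith [hhigh.2 ⟨hu, hright⟩]
  · linarith [hlow.2 ⟨hu, hleft⟩]

lemma norm_sub_sq_le_two_mul_inner_sub (he : ‖e‖ = 1) (hu : ‖u‖ = 1) (hw : ‖w‖ = 1)
    (hside : 0 ≤ o.areaForm e u * o.areaForm e w) (hle : ⟪e, w⟫_ℝ ≤ ⟪e, u⟫_ℝ) :
    ‖u - w‖ ^ 2 ≤ 2 * ⟪e, u - w⟫_ℝ := by
  have hu' := areaForm_sq_add_inner_sq_eq_one o he hu
  have hw' := areaForm_sq_add_inner_sq_eq_one o he hw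
  have huw : ⟪e, u⟫_ℝ * ⟪e, w⟫_ℝ + o.areaForm e u * o.areaForm e w = ⟪u, w⟫_ℝ := by
    rw [o.inner_mul_inner_add_areaForm_mul_areaForm, he, one_pow, one_mul]
  rw [norm_sub_sq_real, inner_sub_right, hu, hw, ← huw]
  set y := ⟪e, u⟫_ℝ
  set z := ⟪e, w⟫_ℝ
  have hy : |y| ≤ 1 := abs_le_one_iff_mul_self_le_one.2 (by nlinarith)
  have hz : |z| ≤ 1 := abs_le_one_iff_mul_self_le_one.2 (by nlinarith)
  rw [abs_le] at hy hz
  have hpos : 0 ≤ (1 - y) * (1 + z) := mul_nonneg (by linarith) (by linarith)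
  have hprod : (1 - y) * (1 + z) ≤ o.areaForm e u * o.areaForm e w := by
    refine le_of_sq_le_sq ?_ hside
    calc ((1 - y) * (1 + z)) ^ 2
        ≤ ((1 - y) * (1 + z)) * ((1 + y) * (1 - z)) := by
          rw [sq]
          exact mul_le_mul_of_nonneg_left (by linarith) hpos
      _ = (1 - y ^ 2) * (1 - z ^ 2) := by ring
      _ = (o.areaForm e u * o.areaForm e w) ^ 2 := by
          rw [mul_pow, eq_sub_of_add_eq hu', eq_sub_of_add_eq hw']
  linarith

-- The norm is convex along `t ↦ u - w - t • e`, so it suffices to bound it at `t = 0` and `t = 2`.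
lemma norm_sub_sub_smul_le_two (he : ‖e‖ = 1) (hu : ‖u‖ = 1) (hw : ‖w‖ = 1)
    (hside : 0 ≤ o.areaForm e u * o.areaForm e w) (hle : ⟪e, w⟫_ℝ ≤ ⟪e, u⟫_ℝ) {t : ℝ}
    (ht : t ∈ Icc 0 2) : ‖u - w - t • e‖ ≤ 2 := by
  have hstart : u - w ∈ closedBall (0 : E) 2 := by
    rw [mem_closedBall_zero_iff]
    linarith [norm_sub_le u w]
  have hend : u - w - (2 : ℝ) • e ∈ closedBall (0 : E) 2 := by
    rw [mem_closedBall_zero_iff]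
    refine le_of_sq_le_sq ?_ zero_le_two
    rw [norm_sub_sq_real, inner_smul_right, real_inner_comm, norm_smul, he]
    have := norm_sub_sq_le_two_mul_inner_sub o he hu hw hside hle
    rw [Real.norm_ofNat]
    nlinarith [sq_nonneg ‖u - w‖]
  have hmem := (convex_closedBall (0 : E) 2).add_smul_sub_mem hstart hend
    (t := t / 2) ⟨by linarith [ht.1], by linarith [ht.2]⟩
  have hpoint : u - w + (t / 2) • (u - w - (2 : ℝ) • e - (u - w)) = u - w - t • e := by
    module
  rwa [hpoint, mem_closedBall_zero_iff] at hmem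

variable {S S' T T' : Set E} {σ σ' : Finset (E × ℝ)} {a b x x' : E} {D R : ℝ}

lemma exists_isInnerBallDirection_left_right (hR : 0 < R)
    (hS : S = ⋃ p ∈ σ, closedBall p.1 p.2) (hσ : ∀ p ∈ σ, R ≤ p.2)
    (hT : T = connectedComponentIn Sᶜ x) (ha : a ∈ closure T)
    (hmin : ∀ t ∈ T, dist a b ≤ dist t b) (he : ‖e‖ = 1) (hD : 0 < D) (hab : b - a = D • e) :
    ∃ l r, IsInnerBallDirection S a R l ∧ IsInnerBallDirection S a R r ∧
      o.areaForm e l ≤ 0 ∧ 0 ≤ o.areaForm e r ∧ 0 ≤ ⟪e, l⟫_ℝ + ⟪e, r⟫_ℝ := by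
  classical
  let direction : E × ℝ → E := fun p => p.2⁻¹ • (p.1 - a)
  let U : Finset E := (σ.filter fun p => a ∈ closedBall p.1 p.2).image direction
  have hU : ∀ u ∈ U, IsInnerBallDirection S a R u := by
    refine Finset.forall_mem_image.2 fun p hp => ?_
    obtain ⟨hpσ, hap⟩ := Finset.mem_filter.1 hp
    exact isInnerBallDirection_of_mem_closure_compl hR (hσ p hpσ)
      (hS ▸ subset_biUnion_of_mem (u := fun p : E × ℝ => closedBall p.1 p.2) hpσ) hap
      (closure_mono (hT ▸ connectedComponentIn_subset _ _) ha)
  have hblock : ∀ v, 0 < ⟪v, e⟫_ℝ → ∃ u ∈ U, 0 ≤ ⟪v, u⟫_ℝ := by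
    intro v hv
    obtain ⟨p, hp, hap, hvp⟩ := exists_ball_blocking_of_nearest hS hT ha hmin (v := v)
      (by rw [hab, inner_smul_right]; exact mul_pos hD hv)
    refine ⟨direction p, Finset.mem_image_of_mem _ (Finset.mem_filter.2 ⟨hp, hap⟩), ?_⟩
    rw [inner_smul_right]
    exact mul_nonneg (inv_nonneg.2 (hR.le.trans (hσ p hp))) hvp
  obtain ⟨l, hl, r, hr, hlr⟩ := exists_left_right_inner_add_inner_nonneg o he
    (fun u hu => (hU u hu).norm_eq_one) hblock
  exact ⟨l, r, hU l hl, hU r hr, hlr⟩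

lemma IsInnerBallDirection.not_disjoint (hu : IsInnerBallDirection S a R u)
    (hw : IsInnerBallDirection S' b R w) (he : ‖e‖ = 1) (hab : b - a = D • e) (hR : 0 < R)
    (hD : 0 ≤ D) (hDR : D ≤ 2 * R) (hside : 0 ≤ o.areaForm e u * o.areaForm e w)
    (hle : ⟪e, w⟫_ℝ ≤ ⟪e, u⟫_ℝ) : ¬ Disjoint S S' := by
  have hcenters : dist (a + R • u) (b + R • w) ≤ 2 * R := by
    have hsub : a + R • u - (b + R • w) = R • (u - w - (D / R) • e) := by
      rw [smul_sub R (u - w), smul_smul, mul_div_cancel₀ D hR.ne', ← hab]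
      module
    have hnorm := norm_sub_sub_smul_le_two o he hu.norm_eq_one hw.norm_eq_one hside hle
      (t := D / R) ⟨by positivity, (div_le_iff₀ hR).2 hDR⟩
    rw [dist_eq_norm, hsub, norm_smul, Real.norm_of_nonneg hR.le]
    nlinarith
  refine not_disjoint_iff.2 ⟨midpoint ℝ (a + R • u) (b + R • w),
    hu.closedBall_subset ?_, hw.closedBall_subset ?_⟩
  · rw [mem_closedBall, dist_midpoint_left, Real.norm_ofNat]
    linarith
  · rw [mem_closedBall, dist_midpoint_right, Real.norm_ofNat]
    linarith

-- The heights of the two directions at `a` sum to at least `0` and those at `b` to at most `0`, so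
-- on one of the two sides the direction at `a` is at least as high as the one at `b`.
lemma two_mul_le_dist_of_nearest (hR : 0 < R) (hS : S = ⋃ p ∈ σ, closedBall p.1 p.2)
    (hS' : S' = ⋃ p ∈ σ', closedBall p.1 p.2) (hσ : ∀ p ∈ σ, R ≤ p.2) (hσ' : ∀ p ∈ σ', R ≤ p.2)
    (hdisj : Disjoint S S') (hT : T = connectedComponentIn Sᶜ x)
    (hT' : T' = connectedComponentIn S'ᶜ x') (ha : a ∈ closure T) (hb : b ∈ closure T')
    (hne : a ≠ b) (hmin : ∀ t ∈ T, dist a b ≤ dist t b) (hmin' : ∀ t ∈ T', dist a b ≤ dist a t) :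
    2 * R ≤ dist a b := by
  have := FiniteDimensional.of_fact_finrank_eq_two (K := ℝ) (V := E)
  let o : Orientation ℝ E (Fin 2) := (Module.finBasisOfFinrankEq ℝ E Fact.out).orientation
  by_contra! hlt
  have hD : 0 < dist a b := dist_pos.2 hne
  obtain ⟨e, he, hab⟩ : ∃ e, ‖e‖ = 1 ∧ b - a = dist a b • e := by
    refine ⟨(dist a b)⁻¹ • (b - a), ?_, (smul_inv_smul₀ hD.ne' _).symm⟩
    rw [norm_smul, ← dist_eq_norm, dist_comm b a, norm_inv, Real.norm_of_nonneg hD.le,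
      inv_mul_cancel₀ hD.ne']
  obtain ⟨l, r, hl, hr, hle, hre, hlr⟩ :=
    exists_isInnerBallDirection_left_right o hR hS hσ hT ha hmin he hD hab
  obtain ⟨r', l', hr', hl', hre', hle', hlr'⟩ :=
    exists_isInnerBallDirection_left_right o hR hS' hσ' hT' hb (b := a)
      (fun t ht => by rw [dist_comm b, dist_comm t]; exact hmin' t ht)
      (e := -e) (by rwa [norm_neg]) hD (by rw [smul_neg, ← hab, neg_sub])
  simp only [map_neg, LinearMap.neg_apply, inner_neg_left] at hre' hle' hlr'
  rcases le_total ⟪e, l'⟫_ℝ ⟪e, l⟫_ℝ with hheight | hheight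
  · exact hl.not_disjoint o hl' he hab hR hD.le hlt.le
      (mul_nonneg_of_nonpos_of_nonpos hle (by linarith)) hheight hdisj
  · exact hr.not_disjoint o hr' he hab hR hD.le hlt.le
      (mul_nonneg hre (by linarith)) (by linarith) hdisj

end Plane

theorem stmt_2 (R₀ R₁ : ℝ) (hR₀ : 0 < R₀) (hR₀₁ : R₀ ≤ R₁)
    (ω : Finset (EuclideanSpace ℝ (Fin 2) × ℝ))
    (hω : ∀ p ∈ ω, p.2 ∈ Set.Icc R₀ R₁)
    (C C' : Set (EuclideanSpace ℝ (Fin 2)))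
    (hC : IsCompOf C (surface ω)) (hC' : IsCompOf C' (surface ω)) (hne : C ≠ C')
    (T T' : Set (EuclideanSpace ℝ (Fin 2)))
    (hT : IsHoleOf T C) (hT' : IsHoleOf T' C')
    (hTT' : ¬ T ⊆ T') (hT'T : ¬ T' ⊆ T) :
    ∀ t ∈ T, ∀ t' ∈ T', 2 * R₀ ≤ dist t t' := by
  intro t ht t' ht'
  have hCC' : Disjoint C C' := hC.disjoint_of_ne hC' hne
  have hclosure : Disjoint (closure T) (closure T') :=
    hT.disjoint_closure (hC.isClosed (isClosed_surface ω)) (hC'.isClosed (isClosed_surface ω))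
      hC.isPreconnected hC'.isPreconnected hCC' hT' hTT' hT'T
  obtain ⟨a, ha, b, hb, hab⟩ := exists_dist_le_dist_of_isCompact hT.isBounded.isCompact_closure
    hT'.isBounded.isCompact_closure ⟨t, subset_closure ht⟩ ⟨t', subset_closure ht'⟩
  refine le_trans ?_ (hab t (subset_closure ht) t' (subset_closure ht'))
  obtain ⟨σ, hσ, hCσ⟩ := hC.exists_subset_eq_surface
  obtain ⟨σ', hσ', hCσ'⟩ := hC'.exists_subset_eq_surface
  obtain ⟨x, -, hTx⟩ := hT.isCompOf_compl
  obtain ⟨x', -, hTx'⟩ := hT'.isCompOf_compl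
  have : Fact (Module.finrank ℝ (EuclideanSpace ℝ (Fin 2)) = 2) := ⟨finrank_euclideanSpace_fin⟩
  exact two_mul_le_dist_of_nearest hR₀ hCσ hCσ' (fun p hp => (hω p (hσ hp)).1)
    (fun p hp => (hω p (hσ' hp)).1) hCC' hTx hTx' ha hb (hclosure.ne_of_mem ha hb)
    (fun s hs => hab s (subset_closure hs) b hb) (fun s hs => hab a ha s (subset_closure hs))
end

section
/- Let ω be a configuration, let α > 0, and let (x,R) with x ∈ ℝ² and R ∈ [R₀,R₁] be a good couple for ω, meaning that every connected component of ω̄ ∩ B̄(x,R) has two-dimensional Lebesgue measure at least α. Denote by N_hol(S) the number of bounded connected components of ℝ² ∖ S. Then the hole number variation when B̄(x,R) is added to ω̄ satisfies N_hol(ω̄ ∪ B̄(x,R)) − N_hol(ω̄) ≤ π·R₁²/α. -/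
open Metric Set MeasureTheory

/-- The number of holes (bounded connected components of the complement) of `S`. -/
noncomputable def nhol (S : Set (EuclideanSpace ℝ (Fin 2))) : ℕ :=
  {T : Set (EuclideanSpace ℝ (Fin 2)) |
    (∃ t ∈ Sᶜ, T = connectedComponentIn Sᶜ t) ∧ Bornology.IsBounded T}.ncard

/-! The holes of a compact plane set `K` are seen by continuous logarithms. For points `p i` outside
`K`, the function `z ↦ ∏ i, (z - p i) ^ n i` has a continuous logarithm on `K` exactly when the
exponents over each hole of `K` sum to zero: inside one component of `Kᶜ` the points can be moved
together without changing the class of the function, a point of the unbounded component can be sent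
to infinity, and a logarithm of a nonzero power around a hole would produce one on a circle.

Hence, placing one point in each hole of `A ∪ B`, only the zero exponent vector gives a logarithm on
`A ∪ B`. Having logarithms on both `A` and `B` imposes one linear condition per hole of `A` or `B`,
and gluing these logarithms along `A ∩ B` imposes one further condition per component of `A ∩ B`.
Therefore `A ∪ B` has at most as many holes as `A` and `B` together, plus the number of components
of `A ∩ B`. A ball has no hole, and the components of its intersection with the surface are disjoint
sets of area at least `α` inside it. -/

open Module

/-- The set of connected components of a subset `S` of a topological space. In the plane,
`C ∈ connectedComponentsIn S` unfolds to `IsCompOf C S`. -/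
def connectedComponentsIn {X : Type*} [TopologicalSpace X] (S : Set X) : Set (Set X) :=
  {C | ∃ x ∈ S, C = connectedComponentIn S x}

/-- The holes of `S`: the bounded connected components of its complement. In the plane,
`(holes S).ncard` unfolds to `nhol S`. -/
def holes {X : Type*} [TopologicalSpace X] [Bornology X] (S : Set X) : Set (Set X) :=
  {V | V ∈ connectedComponentsIn Sᶜ ∧ Bornology.IsBounded V}

/-- `HasLogOn f K` says that `f` has a continuous logarithm on `K`; in particular `f` has no zero
on `K`. Up to functions with this property, the nowhere vanishing continuous functions on a compact
set `K` form its first cohomology group with integer coefficients. -/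
def HasLogOn {X : Type*} [TopologicalSpace X] (f : X → ℂ) (K : Set X) : Prop :=
  ∃ L : X → ℂ, ContinuousOn L K ∧ ∀ z ∈ K, f z = Complex.exp (L z)

section Components

variable {X : Type*} [TopologicalSpace X] {S : Set X}

lemma mem_iff_connectedComponentIn_eq {C : Set X} (hC : C ∈ connectedComponentsIn S) {x : X}
    (hx : x ∈ S) : x ∈ C ↔ connectedComponentIn S x = C := by
  obtain ⟨y, -, rfl⟩ := hC
  exact ⟨fun h ↦ (connectedComponentIn_eq h).symm, fun h ↦ h ▸ mem_connectedComponentIn hx⟩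

lemma subset_of_mem_connectedComponentsIn {C : Set X} (hC : C ∈ connectedComponentsIn S) :
    C ⊆ S := by
  obtain ⟨x, -, rfl⟩ := hC
  exact connectedComponentIn_subset S x

lemma pairwiseDisjoint_connectedComponentsIn (S : Set X) :
    (connectedComponentsIn S).PairwiseDisjoint id := by
  refine fun C hC D hD hne ↦ disjoint_left.2 fun x hxC hxD ↦ hne ?_
  have hx : x ∈ S := subset_of_mem_connectedComponentsIn hC hxC
  exact ((mem_iff_connectedComponentIn_eq hC hx).1 hxC).symm.trans
    ((mem_iff_connectedComponentIn_eq hD hx).1 hxD)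

lemma isPreconnected_of_mem_connectedComponentsIn {C : Set X}
    (hC : C ∈ connectedComponentsIn S) : IsPreconnected C := by
  obtain ⟨x, -, rfl⟩ := hC
  exact isPreconnected_connectedComponentIn

lemma isClosed_of_mem_connectedComponentsIn (hS : IsClosed S) {C : Set X}
    (hC : C ∈ connectedComponentsIn S) : IsClosed C := by
  obtain ⟨x, hx, rfl⟩ := hC
  exact isClosed_of_closure_subset <|
    isPreconnected_connectedComponentIn.closure.subset_connectedComponentIn
      (subset_closure (mem_connectedComponentIn hx))
      (closure_minimal (connectedComponentIn_subset S x) hS)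

lemma isOpen_of_mem_connectedComponentsIn [LocallyConnectedSpace X] (hS : IsOpen S) {C : Set X}
    (hC : C ∈ connectedComponentsIn S) : IsOpen C := by
  obtain ⟨x, -, rfl⟩ := hC
  exact hS.connectedComponentIn

lemma disjoint_frontier_of_mem_connectedComponentsIn [LocallyConnectedSpace X] (hS : IsOpen S)
    {C : Set X} (hC : C ∈ connectedComponentsIn S) : Disjoint (frontier C) S := by
  refine disjoint_left.2 fun x hxC hxS ↦ ?_
  have hx : connectedComponentIn S x ∈ connectedComponentsIn S := ⟨x, hxS, rfl⟩
  obtain ⟨y, hyx, hyC⟩ := mem_closure_iff.1 hxC.1 _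
    (isOpen_of_mem_connectedComponentsIn hS hx) (mem_connectedComponentIn hxS)
  have hCx : connectedComponentIn S x = C :=
    (pairwiseDisjoint_connectedComponentsIn S).elim hx hC (not_disjoint_iff.2 ⟨y, hyx, hyC⟩)
  rw [(isOpen_of_mem_connectedComponentsIn hS hC).frontier_eq] at hxC
  exact hxC.2 (hCx ▸ mem_connectedComponentIn hxS)

lemma finite_connectedComponentsIn_biUnion {ι : Type*} (s : Finset ι) {K : ι → Set X}
    (hK : ∀ i ∈ s, IsPreconnected (K i)) : (connectedComponentsIn (⋃ i ∈ s, K i)).Finite := by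
  set S := ⋃ i ∈ s, K i
  have meeting_subsingleton : ∀ i ∈ s,
      {C ∈ connectedComponentsIn S | (K i ∩ C).Nonempty}.Subsingleton := by
    rintro i hi C ⟨hC, x, hxK, hxC⟩ D ⟨hD, y, hyK, hyD⟩
    have hKS : K i ⊆ S := subset_biUnion_of_mem (u := K) hi
    rw [mem_iff_connectedComponentIn_eq hC (hKS hxK)] at hxC
    rw [mem_iff_connectedComponentIn_eq hD (hKS hyK)] at hyD
    rw [← hxC, ← hyD]
    exact connectedComponentIn_eq ((hK i hi).subset_connectedComponentIn hxK hKS hyK)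
  refine (s.finite_toSet.biUnion fun i hi ↦ (meeting_subsingleton i hi).finite).subset ?_
  rintro C ⟨x, hx, rfl⟩
  obtain ⟨i, hi, hxi⟩ := mem_iUnion₂.1 hx
  exact mem_iUnion₂.2 ⟨i, hi, ⟨x, hx, rfl⟩, x, hxi, mem_connectedComponentIn hx⟩

variable [MeasurableSpace X] [OpensMeasurableSpace X] {μ : Measure X}

lemma encard_connectedComponentsIn_mul_le (hS : IsClosed S) {ε : ENNReal}
    (h : ∀ C ∈ connectedComponentsIn S, ε ≤ μ C) :
    ((connectedComponentsIn S).encard : ENNReal) * ε ≤ μ S :=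
  calc ((connectedComponentsIn S).encard : ENNReal) * ε
      = ∑' _ : connectedComponentsIn S, ε := (ENNReal.tsum_const ε).symm
    _ ≤ ∑' C : connectedComponentsIn S, μ C := ENNReal.tsum_le_tsum fun C ↦ h C C.2
    _ ≤ μ (⋃ C : connectedComponentsIn S, (C : Set X)) :=
        tsum_meas_le_meas_iUnion_of_disjoint μ
          (fun C ↦ (isClosed_of_mem_connectedComponentsIn hS C.2).measurableSet)
          (fun C D hCD ↦ pairwiseDisjoint_connectedComponentsIn S C.2 D.2
            (Subtype.coe_injective.ne hCD))
    _ ≤ μ S := measure_mono (iUnion_subset fun C ↦ subset_of_mem_connectedComponentsIn C.2)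

lemma finite_connectedComponentsIn_of_le_measure (hS : IsClosed S) (hμS : μ S ≠ ⊤) {ε : ENNReal}
    (hε : ε ≠ 0) (h : ∀ C ∈ connectedComponentsIn S, ε ≤ μ C) :
    (connectedComponentsIn S).Finite := by
  refine encard_ne_top_iff.1 fun htop ↦ hμS (top_le_iff.1 ?_)
  simpa [htop, ENNReal.top_mul hε] using encard_connectedComponentsIn_mul_le hS h

lemma ncard_connectedComponentsIn_mul_le (hS : IsClosed S) (hμS : μ S ≠ ⊤) {a : ℝ} (ha : 0 < a)
    (h : ∀ C ∈ connectedComponentsIn S, ENNReal.ofReal a ≤ μ C) :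
    (connectedComponentsIn S).ncard * a ≤ μ.real S := by
  have hfin := finite_connectedComponentsIn_of_le_measure hS hμS (ENNReal.ofReal_pos.2 ha).ne' h
  have := ENNReal.toReal_mono hμS (encard_connectedComponentsIn_mul_le hS h)
  rwa [← hfin.cast_ncard_eq, ENat.toENNReal_coe, ENNReal.toReal_mul, ENNReal.toReal_natCast,
    ENNReal.toReal_ofReal ha.le] at this

end Components

section Transfer

variable {X Y : Type*} [TopologicalSpace X] [TopologicalSpace Y]

lemma connectedComponentsIn_image (φ : X ≃ₜ Y) (S : Set X) :
    connectedComponentsIn (φ '' S) = image φ '' connectedComponentsIn S := by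
  ext C
  constructor
  · rintro ⟨_, ⟨x, hx, rfl⟩, rfl⟩
    exact ⟨_, ⟨x, hx, rfl⟩, φ.image_connectedComponentIn hx⟩
  · rintro ⟨_, ⟨x, hx, rfl⟩, rfl⟩
    exact ⟨φ x, mem_image_of_mem φ hx, φ.image_connectedComponentIn hx⟩

lemma holes_image {E F : Type*} [NormedAddCommGroup E] [NormedSpace ℝ E] [NormedAddCommGroup F]
    [NormedSpace ℝ F] (φ : E ≃L[ℝ] F) (S : Set E) : holes (φ '' S) = image φ '' holes S := by
  have isBounded_image_iff (V : Set E) :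
      Bornology.IsBounded (φ '' V) ↔ Bornology.IsBounded V :=
    ⟨fun h ↦ by simpa [image_image] using φ.symm.lipschitz.isBounded_image h,
      φ.lipschitz.isBounded_image⟩
  have hc := connectedComponentsIn_image φ.toHomeomorph Sᶜ
  simp only [ContinuousLinearEquiv.coe_toHomeomorph, image_compl_eq φ.bijective] at hc
  ext V
  simp only [holes, hc, mem_ofPred_eq, mem_image]
  constructor
  · rintro ⟨⟨W, hW, rfl⟩, hb⟩
    exact ⟨W, ⟨hW, (isBounded_image_iff W).1 hb⟩, rfl⟩
  · rintro ⟨W, ⟨hW, hb⟩, rfl⟩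
    exact ⟨⟨W, hW, rfl⟩, (isBounded_image_iff W).2 hb⟩

end Transfer

/-- Outside a convex set one can escape to infinity along a ray. -/
lemma holes_eq_empty_of_convex {E : Type*} [NormedAddCommGroup E] [NormedSpace ℝ E]
    [Nontrivial E] {S : Set E} (hS : Convex ℝ S) : holes S = ∅ := by
  refine eq_empty_of_forall_notMem ?_
  rintro _ ⟨⟨p, hp, rfl⟩, hb⟩
  rcases S.eq_empty_or_nonempty with rfl | ⟨x, hx⟩
  · rw [compl_empty, connectedComponentIn_univ, PreconnectedSpace.connectedComponent_eq_univ] at hb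
    exact NormedSpace.unbounded_univ ℝ E hb
  have hpx : 0 < dist x p := dist_pos.2 fun h ↦ hp (h ▸ hx)
  have ray_subset_compl : AffineMap.lineMap x p '' Ici (1 : ℝ) ⊆ Sᶜ := by
    rintro _ ⟨t, ht, rfl⟩ hmem
    have ht₀ : 0 < t := one_pos.trans_le ht
    have := hS.lineMap_mem hx hmem ⟨inv_nonneg.2 ht₀.le, inv_le_one_of_one_le₀ ht⟩
    rw [AffineMap.lineMap_lineMap_right, inv_mul_cancel₀ ht₀.ne', AffineMap.lineMap_apply_one]
      at this
    exact hp this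
  have ray_subset : AffineMap.lineMap x p '' Ici (1 : ℝ) ⊆ connectedComponentIn Sᶜ p :=
    (isPreconnected_Ici.image _ (by fun_prop)).subset_connectedComponentIn
      ⟨1, self_mem_Ici, AffineMap.lineMap_apply_one x p⟩ ray_subset_compl
  obtain ⟨r, hr⟩ := (hb.subset ray_subset).subset_closedBall x
  have hdist := hr (mem_image_of_mem _ (mem_Ici.2 (le_max_left 1 ((r + 1) / dist x p))))
  rw [mem_closedBall, dist_lineMap_left, Real.norm_eq_abs] at hdist
  have hle := (le_max_right 1 ((r + 1) / dist x p)).trans (le_abs_self _)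
  rw [div_le_iff₀ hpx] at hle
  linarith

lemma finrank_le_finrank_add_finrank_ker {R M N : Type*} [CommRing R] [IsDomain R]
    [AddCommGroup M] [Module R M] [Module.Finite R M] [AddCommGroup N] [Module R N]
    [Module.Finite R N] (Φ : M →ₗ[R] N) :
    finrank R M ≤ finrank R N + finrank R (LinearMap.ker Φ) :=
  calc finrank R M
      = finrank R (LinearMap.range Φ) + finrank R (LinearMap.ker Φ) := by
        rw [← Φ.quotKerEquivRange.finrank_eq, Submodule.finrank_quotient_add_finrank]
    _ ≤ finrank R N + finrank R (LinearMap.ker Φ) := by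
        gcongr
        exact Submodule.finrank_le _

lemma prod_zpow_eq_zpow_sum₀ {ι G : Type*} [CommGroupWithZero G] (s : Finset ι) (n : ι → ℤ) {a : G}
    (ha : a ≠ 0) : ∏ i ∈ s, a ^ n i = a ^ ∑ i ∈ s, n i := by
  classical
  induction s using Finset.induction_on with
  | empty => simp
  | insert i s hi ih => rw [Finset.prod_insert hi, Finset.sum_insert hi, ih, zpow_add₀ ha]

namespace HasLogOn

variable {X : Type*} [TopologicalSpace X] {f g : X → ℂ} {K : Set X}

lemma congr (hf : HasLogOn f K) (hfg : EqOn g f K) : HasLogOn g K := by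
  obtain ⟨L, hL, hfL⟩ := hf
  exact ⟨L, hL, fun z hz ↦ (hfg hz).trans (hfL z hz)⟩

lemma mono {K' : Set X} (hf : HasLogOn f K) (hK : K' ⊆ K) : HasLogOn f K' := by
  obtain ⟨L, hL, hfL⟩ := hf
  exact ⟨L, hL.mono hK, fun z hz ↦ hfL z (hK hz)⟩

lemma const {w : ℂ} (hw : w ≠ 0) : HasLogOn (fun _ ↦ w) K :=
  ⟨fun _ ↦ Complex.log w, continuousOn_const, fun _ _ ↦ (Complex.exp_log hw).symm⟩

lemma mul (hf : HasLogOn f K) (hg : HasLogOn g K) : HasLogOn (fun z ↦ f z * g z) K := by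
  obtain ⟨L, hL, hfL⟩ := hf
  obtain ⟨M, hM, hgM⟩ := hg
  exact ⟨fun z ↦ L z + M z, hL.add hM,
    fun z hz ↦ by simp only [hfL z hz, hgM z hz, Complex.exp_add]⟩

lemma zpow (hf : HasLogOn f K) (n : ℤ) : HasLogOn (fun z ↦ f z ^ n) K := by
  obtain ⟨L, hL, hfL⟩ := hf
  exact ⟨fun z ↦ n * L z, continuousOn_const.mul hL,
    fun z hz ↦ by simp only [hfL z hz, Complex.exp_int_mul]⟩

lemma prod {ι : Type*} {s : Finset ι} {f : ι → X → ℂ} (hf : ∀ i ∈ s, HasLogOn (f i) K) :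
    HasLogOn (fun z ↦ ∏ i ∈ s, f i z) K := by
  classical
  induction s using Finset.induction_on with
  | empty => simpa using const one_ne_zero
  | insert i s hi ih =>
    simp only [Finset.prod_insert hi]
    exact (hf i (s.mem_insert_self i)).mul (ih fun j hj ↦ hf j (Finset.mem_insert_of_mem hj))

lemma of_norm_sub_one_lt (hf : ContinuousOn f K) (h : ∀ z ∈ K, ‖f z - 1‖ < 1) :
    HasLogOn f K := by
  have mem_slitPlane : ∀ z ∈ K, f z ∈ Complex.slitPlane := fun z hz ↦ by
    simpa using Complex.mem_slitPlane_of_norm_lt_one (h z hz)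
  exact ⟨fun z ↦ Complex.log (f z), hf.clog mem_slitPlane, fun z hz ↦
    (Complex.exp_log (Complex.slitPlane_ne_zero (mem_slitPlane z hz))).symm⟩

lemma univ_of_continuous [SimplyConnectedSpace X] [LocallyPathConnectedSpace X]
    (hf : Continuous f) (hf₀ : ∀ z, f z ≠ 0) : HasLogOn f univ := by
  obtain ⟨z₀⟩ : Nonempty X := inferInstance
  obtain ⟨L, ⟨-, hL⟩, -⟩ := Complex.isCoveringMapOn_exp.existsUnique_continuousMap_lifts ⟨f, hf⟩
    (Complex.exp_log (hf₀ z₀)) hf₀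
  exact ⟨L, L.continuous.continuousOn, fun z _ ↦ (congrFun hL z).symm⟩

lemma union {A B : Set X} (hA : IsClosed A) (hB : IsClosed B) {L M : X → ℂ}
    (hL : ContinuousOn L A) (hfL : ∀ z ∈ A, f z = Complex.exp (L z))
    (hM : ContinuousOn M B) (hfM : ∀ z ∈ B, f z = Complex.exp (M z))
    (hLM : ∀ C ∈ connectedComponentsIn (A ∩ B), ∃ c ∈ C, L c = M c) : HasLogOn f (A ∪ B) := by
  classical
  have agree : EqOn L M (A ∩ B) := fun z hz ↦ by
    have hC : connectedComponentIn (A ∩ B) z ∈ connectedComponentsIn (A ∩ B) := ⟨z, hz, rfl⟩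
    have hCAB := subset_of_mem_connectedComponentsIn hC
    obtain ⟨c, hcC, hc⟩ := hLM _ hC
    refine Complex.isCoveringMap_exp.eqOn_of_comp_eqOn
      (isPreconnected_of_mem_connectedComponentsIn hC) (hL.mono (hCAB.trans inter_subset_left))
      (hM.mono (hCAB.trans inter_subset_right)) (fun w hw ↦ Subtype.ext ?_) hcC hc
      (mem_connectedComponentIn hz)
    exact (hfL w (hCAB hw).1).symm.trans (hfM w (hCAB hw).2)
  have glue_eq_left : EqOn (A.piecewise L M) L A := piecewise_eqOn A L M
  have glue_eq_right : EqOn (A.piecewise L M) M B := fun z hz ↦ by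
    by_cases hzA : z ∈ A
    · rw [glue_eq_left hzA, agree ⟨hzA, hz⟩]
    · exact piecewise_eq_of_notMem A L M hzA
  refine ⟨A.piecewise L M,
    (hL.congr glue_eq_left).union_of_isClosed (hM.congr glue_eq_right) hA hB, ?_⟩
  rintro z (hz | hz)
  · rw [glue_eq_left hz, hfL z hz]
  · rw [glue_eq_right hz, hfM z hz]

end HasLogOn

/-- The Mayer–Vietoris step: comparing logarithms on `A` with logarithms on `B` yields one integer
for each component of `A ∩ B`, and these integers vanish only if the logarithms glue. -/
lemma card_le_ncard_connectedComponentsIn_inter {X ι : Type*} [TopologicalSpace X] [Fintype ι]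
    {A B : Set X} (hA : IsClosed A) (hB : IsClosed B) (hAB : (connectedComponentsIn (A ∩ B)).Finite)
    {f : ι → X → ℂ} (hfA : ∀ i, HasLogOn (f i) A) (hfB : ∀ i, HasLogOn (f i) B)
    (hf : ∀ n : ι → ℤ, HasLogOn (fun z ↦ ∏ i, f i z ^ n i) (A ∪ B) → n = 0) :
    Fintype.card ι ≤ (connectedComponentsIn (A ∩ B)).ncard := by
  choose L hL hfL using hfA
  choose M hM hfM using hfB
  have basepoint (C : connectedComponentsIn (A ∩ B)) : ∃ c, c ∈ C.1 := by
    obtain ⟨_, x, hx, rfl⟩ := C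
    exact ⟨x, mem_connectedComponentIn hx⟩
  choose c hc using basepoint
  have jump (C : connectedComponentsIn (A ∩ B)) (i : ι) :
      ∃ a : ℤ, L i (c C) = M i (c C) + a * (2 * Real.pi * Complex.I) := by
    have hcAB := subset_of_mem_connectedComponentsIn C.2 (hc C)
    rw [← Complex.exp_eq_exp_iff_exists_int, ← hfL i _ hcAB.1, hfM i _ hcAB.2]
  choose a ha using jump
  have jump_injective : Function.Injective (Matrix.of a).mulVecLin := by
    refine (injective_iff_map_eq_zero _).2 fun n hn ↦ hf n ?_
    refine HasLogOn.union hA hB (L := fun z ↦ ∑ i, n i * L i z) (M := fun z ↦ ∑ i, n i * M i z)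
      (continuousOn_finsetSum _ fun i _ ↦ continuousOn_const.mul (hL i))
      (fun z hz ↦ by simp only [Complex.exp_sum, Complex.exp_int_mul, hfL _ z hz])
      (continuousOn_finsetSum _ fun i _ ↦ continuousOn_const.mul (hM i))
      (fun z hz ↦ by simp only [Complex.exp_sum, Complex.exp_int_mul, hfM _ z hz])
      fun C hC ↦ ⟨c ⟨C, hC⟩, hc ⟨C, hC⟩, ?_⟩
    have jump_sum_eq_zero : ∑ i, a ⟨C, hC⟩ i * n i = 0 := congrFun hn ⟨C, hC⟩
    calc ∑ i, n i * L i (c ⟨C, hC⟩)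
        = ∑ i, n i * M i (c ⟨C, hC⟩) +
            ((∑ i, a ⟨C, hC⟩ i * n i : ℤ) : ℂ) * (2 * Real.pi * Complex.I) := by
          push_cast
          rw [Finset.sum_mul, ← Finset.sum_add_distrib]
          exact Finset.sum_congr rfl fun i _ ↦ by rw [ha]; ring
      _ = ∑ i, n i * M i (c ⟨C, hC⟩) := by rw [jump_sum_eq_zero]; simp
  have := hAB.fintype
  simpa only [← Nat.card_coe_set_eq, Nat.card_eq_fintype_card] using
    card_le_of_injective ℤ (Matrix.of a).mulVecLin jump_injective

section LogarithmsInThePlane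

variable {K : Set ℂ}

lemma hasLogOn_sub_div_sub_of_dist_lt {p q : ℂ} (h : ∀ z ∈ K, dist p q < dist z q) :
    HasLogOn (fun z ↦ (z - p) / (z - q)) K := by
  have sub_ne : ∀ z ∈ K, z - q ≠ 0 := fun z hz ↦
    sub_ne_zero.2 (dist_pos.1 (dist_nonneg.trans_lt (h z hz)))
  refine .of_norm_sub_one_lt (by fun_prop (disch := assumption)) fun z hz ↦ ?_
  have hq := sub_ne z hz
  have : (z - p) / (z - q) - 1 = (q - p) / (z - q) := by field_simp; ring
  rw [this, norm_div, div_lt_one (norm_pos_iff.2 hq), ← dist_eq_norm, ← dist_eq_norm, dist_comm]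
  exact h z hz

lemma hasLogOn_sub_of_norm_lt {p : ℂ} (hp : p ≠ 0) (h : ∀ z ∈ K, ‖z‖ < ‖p‖) :
    HasLogOn (fun z ↦ z - p) K := by
  have near_one : HasLogOn (fun z ↦ 1 - z / p) K := by
    refine .of_norm_sub_one_lt (by fun_prop) fun z hz ↦ ?_
    rw [sub_sub_cancel_left, norm_neg, norm_div, div_lt_one (norm_pos_iff.2 hp)]
    exact h z hz
  exact ((HasLogOn.const (neg_ne_zero.2 hp)).mul near_one).congr fun z _ ↦ by field_simp; ring

lemma hasLogOn_sub_div_sub_of_isPreconnected (hK : IsClosed K) {V : Set ℂ} (hV : IsPreconnected V)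
    (hVK : V ⊆ Kᶜ) {p q : ℂ} (hp : p ∈ V) (hq : q ∈ V) :
    HasLogOn (fun z ↦ (z - p) / (z - q)) K := by
  have sub_ne {a z : ℂ} (ha : a ∈ V) (hz : z ∈ K) : z - a ≠ 0 :=
    sub_ne_zero.2 fun h ↦ hVK ha (h ▸ hz)
  refine hV.induction₂ (fun p q ↦ HasLogOn (fun z ↦ (z - p) / (z - q)) K) ?nearby ?trans ?symm hp hq
  case trans =>
    refine fun a b c _ hb _ hab hbc ↦ (hab.mul hbc).congr fun z hz ↦ ?_
    exact (div_mul_div_cancel₀ (sub_ne hb hz)).symm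
  case symm =>
    refine fun a b _ _ hab ↦ (hab.zpow (-1)).congr fun z _ ↦ ?_
    simp only [zpow_neg_one, inv_div]
  case nearby =>
    intro a ha
    obtain ⟨r, hr, hball⟩ := Metric.isOpen_iff.1 hK.isOpen_compl a (hVK ha)
    filter_upwards [mem_nhdsWithin_of_mem_nhds (ball_mem_nhds a hr)] with b hb
    refine ((hasLogOn_sub_div_sub_of_dist_lt fun z hz ↦ ?_).zpow (-1)).congr
      (f := fun z ↦ ((z - b) / (z - a)) ^ (-1 : ℤ)) fun z _ ↦ by simp only [zpow_neg_one, inv_div]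
    exact hb.trans_le (not_lt.1 fun hza ↦ hball hza hz)

lemma hasLogOn_sub_of_not_isBounded (hK : IsCompact K) {V : Set ℂ} (hV : IsPreconnected V)
    (hVK : V ⊆ Kᶜ) (hVb : ¬ Bornology.IsBounded V) {p : ℂ} (hp : p ∈ V) :
    HasLogOn (fun z ↦ z - p) K := by
  obtain ⟨r, hr, hKr⟩ := hK.isBounded.subset_ball_lt 0 0
  obtain ⟨q, hqV, hq⟩ : ∃ q ∈ V, r ≤ ‖q‖ := by
    by_contra! hVr
    exact hVb (isBounded_ball.subset fun q hq ↦ mem_ball_zero_iff.2 (hVr q hq))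
  have log_sub_q : HasLogOn (fun z ↦ z - q) K :=
    hasLogOn_sub_of_norm_lt (norm_pos_iff.1 (hr.trans_le hq)) fun z hz ↦
      (mem_ball_zero_iff.1 (hKr hz)).trans_le hq
  refine ((hasLogOn_sub_div_sub_of_isPreconnected hK.isClosed hV hVK hp hqV).mul log_sub_q).congr
    fun z hz ↦ (div_mul_cancel₀ _ ?_).symm
  exact sub_ne_zero.2 fun h ↦ hVK hqV (h ▸ hz)

lemma hasLogOn_prod_sub_zpow_div (hK : IsClosed K) {V : Set ℂ} (hV : IsPreconnected V)
    (hVK : V ⊆ Kᶜ) {ι : Type*} (s : Finset ι) {p : ι → ℂ} (hp : ∀ i ∈ s, p i ∈ V) (n : ι → ℤ)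
    {q : ℂ} (hq : q ∈ V) :
    HasLogOn (fun z ↦ (∏ i ∈ s, (z - p i) ^ n i) / (z - q) ^ ∑ i ∈ s, n i) K := by
  refine (HasLogOn.prod (s := s) fun i hi ↦
    (hasLogOn_sub_div_sub_of_isPreconnected hK hV hVK (hp i hi) hq).zpow (n i)).congr fun z hz ↦ ?_
  have hzq : z - q ≠ 0 := sub_ne_zero.2 fun h ↦ hVK hq (h ▸ hz)
  simp only [div_zpow, Finset.prod_div_distrib, prod_zpow_eq_zpow_sum₀ s n hzq]

lemma eq_zero_of_hasLogOn_sphere {p : ℂ} {r : ℝ} (hr : 0 < r) {n : ℤ}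
    (h : HasLogOn (fun z ↦ (z - p) ^ n) (sphere p r)) : n = 0 := by
  obtain ⟨L, hL, hexp⟩ := h
  have circleMap_mem (θ : ℝ) : circleMap p r θ ∈ sphere p r := circleMap_mem_sphere p hr.le θ
  let D : ℝ → ℂ := fun θ ↦ L (circleMap p r θ) - n * (θ * Complex.I)
  have hD : Continuous D :=
    (hL.comp_continuous (continuous_circleMap p r) circleMap_mem).sub (by fun_prop)
  have exp_D (θ : ℝ) : Complex.exp (D θ) = (r : ℂ) ^ n := by
    have hexpθ : (circleMap p r θ - p) ^ n = Complex.exp (L (circleMap p r θ)) :=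
      hexp _ (circleMap_mem θ)
    rw [Complex.exp_sub, ← hexpθ, Complex.exp_int_mul, circleMap_sub_center,
      circleMap_zero, mul_zpow, mul_div_cancel_right₀ _ (zpow_ne_zero _ (Complex.exp_ne_zero _))]
  have D_const : D (2 * Real.pi) = D 0 := Complex.isCoveringMap_exp.const_of_comp hD
    (fun θ θ' ↦ Subtype.ext ((exp_D θ).trans (exp_D θ').symm)) _ _
  have : (n : ℂ) * (2 * Real.pi * Complex.I) = 0 := by
    simpa [D, circleMap, Complex.exp_two_pi_mul_I] using D_const
  simpa [Complex.two_pi_I_ne_zero] using this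

/-- If the product had a logarithm `G` on `K`, then replacing `(z - p) ^ n` inside `V` by
`exp G / u` would extend it to a nowhere vanishing function on the whole plane. -/
lemma eq_zero_of_hasLogOn_sub_zpow_mul (hK : IsClosed K) {V : Set ℂ} (hV : V ∈ holes K) {p : ℂ}
    (hp : p ∈ V) {u : ℂ → ℂ} (hu : ContinuousOn u (closure V)) (hu₀ : ∀ z ∈ closure V, u z ≠ 0)
    {n : ℤ} (h : HasLogOn (fun z ↦ (z - p) ^ n * u z) K) : n = 0 := by
  classical
  obtain ⟨g, hg, hexp⟩ := h
  obtain ⟨G, hG⟩ := ContinuousMap.exists_restrict_eq hK ⟨K.domRestrict g, hg.domRestrict⟩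
  have hGg : EqOn G g K := fun z hz ↦ congrArg (fun f ↦ f ⟨z, hz⟩) hG
  have hVo : IsOpen V := isOpen_of_mem_connectedComponentsIn hK.isOpen_compl hV.1
  have sub_ne {z : ℂ} (hz : z ∉ V) : z - p ≠ 0 := sub_ne_zero.2 fun e ↦ hz (e ▸ hp)
  let F : ℂ → ℂ := V.piecewise (fun z ↦ Complex.exp (G z) / u z) (fun z ↦ (z - p) ^ n)
  have hF : Continuous F := by
    refine continuous_piecewise (fun z hz ↦ ?_)
      ((Complex.continuous_exp.comp G.continuous).continuousOn.div hu hu₀) ?_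
    · have hzK : z ∈ K := not_notMem.1 (disjoint_left.1
        (disjoint_frontier_of_mem_connectedComponentsIn hK.isOpen_compl hV.1) hz)
      rw [hGg hzK, ← hexp z hzK, mul_div_cancel_right₀ _ (hu₀ z hz.1)]
    · rw [hVo.isClosed_compl.closure_eq]
      exact (by fun_prop : Continuous fun z : ℂ ↦ z - p).continuousOn.zpow₀ n
        fun z hz ↦ .inl (sub_ne hz)
  have hF₀ (z : ℂ) : F z ≠ 0 := by
    by_cases hz : z ∈ V
    · simpa only [F, piecewise_eq_of_mem _ _ _ hz] using
        div_ne_zero (Complex.exp_ne_zero _) (hu₀ z (subset_closure hz))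
    · simpa only [F, piecewise_eq_of_notMem _ _ _ hz] using zpow_ne_zero n (sub_ne hz)
  obtain ⟨r, hr, hVr⟩ := hV.2.subset_ball_lt 0 p
  refine eq_zero_of_hasLogOn_sphere (p := p) hr (((HasLogOn.univ_of_continuous hF hF₀).mono
    (subset_univ _)).congr fun z hz ↦ ?_)
  have hzV : z ∉ V := fun hzV ↦ (mem_ball.1 (hVr hzV)).ne hz
  simp only [F, piecewise_eq_of_notMem _ _ _ hzV]

variable {ι : Type*} [Fintype ι] {p : ι → ℂ}

open scoped Classical in
lemma sum_eq_zero_of_hasLogOn_prod_sub_zpow (hK : IsClosed K) (hp : ∀ i, p i ∉ K) {n : ι → ℤ}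
    (h : HasLogOn (fun z ↦ ∏ i, (z - p i) ^ n i) K) {V : Set ℂ} (hV : V ∈ holes K) :
    ∑ i with p i ∈ V, n i = 0 := by
  have hVo : IsOpen V := isOpen_of_mem_connectedComponentsIn hK.isOpen_compl hV.1
  have hVK : V ⊆ Kᶜ := subset_of_mem_connectedComponentsIn hV.1
  obtain ⟨q, hq⟩ : V.Nonempty := by
    obtain ⟨⟨q, hq, rfl⟩, -⟩ := hV
    exact ⟨q, mem_connectedComponentIn hq⟩
  have sub_ne {i : ι} (hi : p i ∉ V) {z : ℂ} (hz : z ∈ closure V) : z - p i ≠ 0 := by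
    refine sub_ne_zero.2 fun hzi ↦ ?_
    have hfr : z ∈ frontier V := hVo.frontier_eq ▸ ⟨hz, hzi ▸ hi⟩
    exact disjoint_left.1 (disjoint_frontier_of_mem_connectedComponentsIn hK.isOpen_compl hV.1)
      hfr (hzi ▸ hp i)
  have log_quotient := hasLogOn_prod_sub_zpow_div hK
    (isPreconnected_of_mem_connectedComponentsIn hV.1) hVK (Finset.univ.filter (p · ∈ V))
    (fun i hi ↦ (Finset.mem_filter.1 hi).2) n hq
  refine eq_zero_of_hasLogOn_sub_zpow_mul hK hV hq
    (u := fun z ↦ ∏ i with p i ∉ V, (z - p i) ^ n i) ?_ ?_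
    ((h.mul (log_quotient.zpow (-1))).congr fun z hz ↦ ?_)
  · refine continuousOn_finsetProd _ fun i hi ↦
      (by fun_prop : Continuous fun z : ℂ ↦ z - p i).continuousOn.zpow₀ _ fun z hz ↦ .inl ?_
    exact sub_ne (Finset.mem_filter.1 hi).2 hz
  · exact fun z hz ↦ Finset.prod_ne_zero_iff.2 fun i hi ↦
      zpow_ne_zero _ (sub_ne (Finset.mem_filter.1 hi).2 hz)
  · have prod_ne : ∏ i with p i ∈ V, (z - p i) ^ n i ≠ 0 := Finset.prod_ne_zero_iff.2
      fun i _ ↦ zpow_ne_zero _ (sub_ne_zero.2 fun hzi ↦ hp i (hzi ▸ hz))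
    simp only [zpow_neg_one, inv_div,
      ← Finset.prod_filter_mul_prod_filter_not Finset.univ (p · ∈ V)]
    field_simp

open scoped Classical in
lemma hasLogOn_prod_sub_zpow_of_sum_eq_zero (hK : IsCompact K) (hp : ∀ i, p i ∉ K) {n : ι → ℤ}
    (h : ∀ V ∈ holes K, ∑ i with p i ∈ V, n i = 0) :
    HasLogOn (fun z ↦ ∏ i, (z - p i) ^ n i) K := by
  let comp : ι → Set ℂ := fun i ↦ connectedComponentIn Kᶜ (p i)
  have log_fiber : ∀ V ∈ Finset.univ.image comp,
      HasLogOn (fun z ↦ ∏ i with comp i = V, (z - p i) ^ n i) K := by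
    intro V hV
    obtain ⟨j, -, rfl⟩ := Finset.mem_image.1 hV
    have hj : comp j ∈ connectedComponentsIn Kᶜ := ⟨p j, hp j, rfl⟩
    have mem_iff (i : ι) : p i ∈ comp j ↔ comp i = comp j :=
      mem_iff_connectedComponentIn_eq hj (hp i)
    have hconn := isPreconnected_of_mem_connectedComponentsIn hj
    have hsub := subset_of_mem_connectedComponentsIn hj
    simp only [← mem_iff]
    by_cases hb : Bornology.IsBounded (comp j)
    · simpa only [h _ ⟨hj, hb⟩, zpow_zero, div_one] using hasLogOn_prod_sub_zpow_div hK.isClosed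
        hconn hsub (Finset.univ.filter (p · ∈ comp j)) (fun i hi ↦ (Finset.mem_filter.1 hi).2) n
        ((mem_iff j).2 rfl)
    · exact .prod fun i hi ↦ (hasLogOn_sub_of_not_isBounded hK hconn hsub hb
        (Finset.mem_filter.1 hi).2).zpow (n i)
  refine (HasLogOn.prod log_fiber).congr fun z _ ↦ ?_
  exact (Finset.prod_fiberwise_of_maps_to (fun i hi ↦ Finset.mem_image_of_mem comp hi) _).symm

end LogarithmsInThePlane

section HoleCount

open scoped Classical in
lemma eq_zero_of_hasLogOn_prod_sub_zpow {K : Set ℂ} (hK : IsClosed K) {ι : Type*} [Fintype ι]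
    {V : ι → Set ℂ} (hV : ∀ i, V i ∈ holes K) (hVinj : Function.Injective V) {p : ι → ℂ}
    (hp : ∀ i, p i ∈ V i) {n : ι → ℤ} (h : HasLogOn (fun z ↦ ∏ i, (z - p i) ^ n i) K) :
    n = 0 := by
  funext i
  have hpK (j : ι) : p j ∉ K := subset_of_mem_connectedComponentsIn (hV j).1 (hp j)
  have mem_iff (j : ι) : p j ∈ V i ↔ j = i := by
    refine ⟨fun hj ↦ hVinj ?_, fun hj ↦ hj ▸ hp j⟩
    exact (pairwiseDisjoint_connectedComponentsIn Kᶜ).elim (hV j).1 (hV i).1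
      (not_disjoint_iff.2 ⟨p j, hp j, hj⟩)
  simpa [mem_iff, Finset.sum_filter] using sum_eq_zero_of_hasLogOn_prod_sub_zpow hK hpK h (hV i)

open scoped Classical in
lemma card_le_ncard_connectedComponentsIn_of_linearIndependent {A B : Set ℂ} (hA : IsCompact A)
    (hB : IsCompact B) (hAB : (connectedComponentsIn (A ∩ B)).Finite) {ι κ : Type*} [Fintype ι]
    [Fintype κ] {V : ι → Set ℂ} (hV : ∀ i, V i ∈ holes (A ∪ B)) (hVinj : Function.Injective V)
    {p : ι → ℂ} (hp : ∀ i, p i ∈ V i) {v : κ → ι → ℤ} (hv : LinearIndependent ℤ v)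
    (hv₀ : ∀ j, ∀ W ∈ holes A ∪ holes B, ∑ i with p i ∈ W, v j i = 0) :
    Fintype.card κ ≤ (connectedComponentsIn (A ∩ B)).ncard := by
  have hpAB (i : ι) : p i ∉ A ∪ B := subset_of_mem_connectedComponentsIn (hV i).1 (hp i)
  refine card_le_ncard_connectedComponentsIn_inter hA.isClosed hB.isClosed hAB
    (f := fun j z ↦ ∏ i, (z - p i) ^ v j i)
    (fun j ↦ hasLogOn_prod_sub_zpow_of_sum_eq_zero hA (fun i hi ↦ hpAB i (.inl hi))
      fun W hW ↦ hv₀ j W (.inl hW))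
    (fun j ↦ hasLogOn_prod_sub_zpow_of_sum_eq_zero hB (fun i hi ↦ hpAB i (.inr hi))
      fun W hW ↦ hv₀ j W (.inr hW)) fun n hn ↦ ?_
  have log_combination : HasLogOn (fun z ↦ ∏ i, (z - p i) ^ (∑ j, n j • v j) i) (A ∪ B) := by
    refine hn.congr fun z hz ↦ ?_
    have sub_ne (i : ι) : z - p i ≠ 0 := sub_ne_zero.2 fun h ↦ hpAB i (h ▸ hz)
    simp only [← Finset.prod_zpow, ← zpow_mul]
    rw [Finset.prod_comm]
    refine Finset.prod_congr rfl fun i _ ↦ ?_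
    simp only [prod_zpow_eq_zpow_sum₀ _ _ (sub_ne i), Finset.sum_apply, Pi.smul_apply, smul_eq_mul,
      mul_comm]
  exact funext (Fintype.linearIndependent_iff.1 hv n
    (eq_zero_of_hasLogOn_prod_sub_zpow (hA.union hB).isClosed hV hVinj hp log_combination))

lemma card_le_ncard_holes_union_add_ncard {A B : Set ℂ} (hA : IsCompact A) (hB : IsCompact B)
    (hfA : (holes A).Finite) (hfB : (holes B).Finite)
    (hfAB : (connectedComponentsIn (A ∩ B)).Finite) {ι : Type*} [Fintype ι] {V : ι → Set ℂ}
    (hV : ∀ i, V i ∈ holes (A ∪ B)) (hVinj : Function.Injective V) :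
    Fintype.card ι ≤ (holes A ∪ holes B).ncard + (connectedComponentsIn (A ∩ B)).ncard := by
  classical
  have := (hfA.union hfB).fintype
  have basepoint (i : ι) : (V i).Nonempty := by
    obtain ⟨⟨x, hx, hVx⟩, -⟩ := hV i
    exact ⟨x, hVx ▸ mem_connectedComponentIn hx⟩
  choose p hp using basepoint
  let Φ : (ι → ℤ) →ₗ[ℤ] (↥(holes A ∪ holes B) → ℤ) :=
    LinearMap.pi fun W ↦ ∑ i with p i ∈ W.1, LinearMap.proj i
  let b := Module.finBasis ℤ (LinearMap.ker Φ)
  have finrank_ker_le : finrank ℤ (LinearMap.ker Φ) ≤ (connectedComponentsIn (A ∩ B)).ncard := by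
    rw [← Fintype.card_fin (finrank ℤ (LinearMap.ker Φ))]
    refine card_le_ncard_connectedComponentsIn_of_linearIndependent hA hB hfAB hV hVinj hp
      (b.linearIndependent.map' _ (LinearMap.ker Φ).ker_subtype) fun j W hW ↦ ?_
    simpa [Φ] using congrFun (LinearMap.mem_ker.1 (b j).2) ⟨W, hW⟩
  calc Fintype.card ι = finrank ℤ (ι → ℤ) := (finrank_fintype_fun_eq_card ℤ).symm
    _ ≤ finrank ℤ (↥(holes A ∪ holes B) → ℤ) + finrank ℤ (LinearMap.ker Φ) :=
      finrank_le_finrank_add_finrank_ker Φ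
    _ ≤ (holes A ∪ holes B).ncard + (connectedComponentsIn (A ∩ B)).ncard := by
      rw [finrank_fintype_fun_eq_card, ← Nat.card_eq_fintype_card, Nat.card_coe_set_eq]
      gcongr

lemma encard_holes_union_le_complex {A B : Set ℂ} (hA : IsCompact A) (hB : IsCompact B) :
    (holes (A ∪ B)).encard ≤
      (holes A ∪ holes B).encard + (connectedComponentsIn (A ∩ B)).encard := by
  rcases eq_top_or_lt_top
    ((holes A ∪ holes B).encard + (connectedComponentsIn (A ∩ B)).encard) with htop | hfin
  · exact htop ▸ le_top
  rw [ENat.add_lt_top, encard_lt_top_iff, encard_lt_top_iff] at hfin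
  obtain ⟨hfAB, hfC⟩ := hfin
  rw [← hfAB.cast_ncard_eq, ← hfC.cast_ncard_eq, ← Nat.cast_add]
  by_contra! hlt
  obtain ⟨T, hT, hTcard⟩ := exists_subset_encard_eq (Order.add_one_le_of_lt hlt)
  rw [← Nat.cast_add_one] at hTcard
  have hTfin : T.Finite := finite_of_encard_eq_coe hTcard
  have := hTfin.fintype
  have hcard := card_le_ncard_holes_union_add_ncard hA hB (hfAB.subset subset_union_left)
    (hfAB.subset subset_union_right) hfC (fun V : T ↦ hT V.2) Subtype.val_injective
  rw [← Nat.card_eq_fintype_card, Nat.card_coe_set_eq, ncard_def, hTcard] at hcard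
  exact Nat.not_succ_le_self _ hcard

variable {E : Type*} [NormedAddCommGroup E] [NormedSpace ℝ E] {A B : Set E}

lemma encard_holes_union_le (hE : finrank ℝ E = 2) (hA : IsCompact A) (hB : IsCompact B) :
    (holes (A ∪ B)).encard ≤
      (holes A ∪ holes B).encard + (connectedComponentsIn (A ∩ B)).encard := by
  have := FiniteDimensional.of_finrank_eq_succ hE
  let φ : E ≃L[ℝ] ℂ := .ofFinrankEq (hE.trans Complex.finrank_real_complex.symm)
  have image_injective : Function.Injective (image φ) := φ.injective.image_injective
  have h := encard_holes_union_le_complex (hA.image φ.continuous) (hB.image φ.continuous)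
  have hC := connectedComponentsIn_image φ.toHomeomorph (A ∩ B)
  rw [ContinuousLinearEquiv.coe_toHomeomorph] at hC
  rwa [← image_union, ← image_inter φ.injective, holes_image, holes_image, holes_image, hC,
    ← image_union, image_injective.encard_image, image_injective.encard_image,
    image_injective.encard_image] at h

lemma finite_holes_biUnion (hE : finrank ℝ E = 2) {ι : Type*} (s : Finset ι) {K : ι → Set E}
    (hK : ∀ i ∈ s, IsCompact (K i)) (hKc : ∀ i ∈ s, Convex ℝ (K i)) :
    (holes (⋃ i ∈ s, K i)).Finite := by
  classical
  have : Nontrivial E := Module.nontrivial_of_finrank_eq_succ hE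
  induction s using Finset.induction_on with
  | empty => simp [holes_eq_empty_of_convex convex_empty]
  | insert i s _ ih =>
    simp only [Finset.forall_mem_insert] at hK hKc
    have finite_components : (connectedComponentsIn ((⋃ j ∈ s, K j) ∩ K i)).Finite := by
      rw [iUnion₂_inter]
      exact finite_connectedComponentsIn_biUnion s fun j hj ↦
        ((hKc.2 j hj).inter hKc.1).isPreconnected
    rw [Finset.set_biUnion_insert, union_comm, ← encard_lt_top_iff]
    refine (encard_holes_union_le hE (s.isCompact_biUnion hK.2) hK.1).trans_lt ?_
    rw [holes_eq_empty_of_convex hKc.1, union_empty]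
    exact WithTop.add_lt_top.2 ⟨(ih hK.2 hKc.2).encard_lt_top, finite_components.encard_lt_top⟩

end HoleCount

lemma isCompact_surface (ω : Finset (EuclideanSpace ℝ (Fin 2) × ℝ)) : IsCompact (surface ω) :=
  ω.isCompact_biUnion fun p _ ↦ isCompact_closedBall p.1 p.2

lemma finite_holes_surface (ω : Finset (EuclideanSpace ℝ (Fin 2) × ℝ)) :
    (holes (surface ω)).Finite :=
  finite_holes_biUnion finrank_euclideanSpace_fin ω (fun p _ ↦ isCompact_closedBall p.1 p.2)
    fun p _ ↦ convex_closedBall p.1 p.2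

lemma volume_real_inter_closedBall_le (S : Set (EuclideanSpace ℝ (Fin 2)))
    (x : EuclideanSpace ℝ (Fin 2)) {R R₁ : ℝ} (hR : 0 ≤ R) (hRR₁ : R ≤ R₁) :
    volume.real (S ∩ closedBall x R) ≤ Real.pi * R₁ ^ 2 :=
  calc volume.real (S ∩ closedBall x R)
      ≤ volume.real (closedBall x R) :=
        measureReal_mono inter_subset_right (isCompact_closedBall x R).measure_ne_top
    _ = Real.pi * R ^ 2 := by
        rw [measureReal_def, EuclideanSpace.volume_closedBall_fin_two]
        simp [hR, Real.pi_nonneg, mul_comm]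
    _ ≤ Real.pi * R₁ ^ 2 := by gcongr

theorem stmt_5_general {E : Type*} [NormedAddCommGroup E] [NormedSpace ℝ E]
    (hE : finrank ℝ E = 2) [MeasurableSpace E] [OpensMeasurableSpace E] (μ : Measure E)
    [IsFiniteMeasureOnCompacts μ] {A B : Set E} (hA : IsCompact A) (hfA : (holes A).Finite)
    (hB : IsCompact B) (hB₀ : holes B = ∅) {α : ℝ} (hα : 0 < α)
    (hgood : ∀ C ∈ connectedComponentsIn (A ∩ B), ENNReal.ofReal α ≤ μ C) :
    ((holes (A ∪ B)).ncard : ℝ) - (holes A).ncard ≤ μ.real (A ∩ B) / α := by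
  have hAB : IsCompact (A ∩ B) := hA.inter hB
  have finite_components : (connectedComponentsIn (A ∩ B)).Finite :=
    finite_connectedComponentsIn_of_le_measure hAB.isClosed hAB.measure_ne_top
      (ENNReal.ofReal_pos.2 hα).ne' hgood
  have count : (holes (A ∪ B)).ncard ≤ (holes A).ncard + (connectedComponentsIn (A ∩ B)).ncard := by
    have := encard_holes_union_le hE hA hB
    rw [hB₀, union_empty, ← hfA.cast_ncard_eq, ← finite_components.cast_ncard_eq] at this
    exact ENat.toNat_le_of_le_natCast (mod_cast this)
  calc ((holes (A ∪ B)).ncard : ℝ) - (holes A).ncard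
      ≤ (connectedComponentsIn (A ∩ B)).ncard := sub_le_iff_le_add'.2 (mod_cast count)
    _ ≤ μ.real (A ∩ B) / α := (le_div_iff₀ hα).2
      (ncard_connectedComponentsIn_mul_le hAB.isClosed hAB.measure_ne_top hα hgood)

theorem stmt_5 (R₀ R₁ : ℝ) (hR₀ : 0 < R₀) (hR₀₁ : R₀ ≤ R₁)
    (ω : Finset (EuclideanSpace ℝ (Fin 2) × ℝ))
    (hω : ∀ p ∈ ω, p.2 ∈ Set.Icc R₀ R₁)
    (α : ℝ) (hα : 0 < α)
    (x : EuclideanSpace ℝ (Fin 2)) (R : ℝ) (hR : R ∈ Set.Icc R₀ R₁)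
    (hgood : ∀ C, IsCompOf C (surface ω ∩ Metric.closedBall x R) →
      ENNReal.ofReal α ≤ volume C) :
    (nhol (surface ω ∪ Metric.closedBall x R) : ℝ) - (nhol (surface ω) : ℝ) ≤
      Real.pi * R₁ ^ 2 / α := by
  have key := stmt_5_general finrank_euclideanSpace_fin volume (isCompact_surface ω)
    (finite_holes_surface ω) (isCompact_closedBall x R)
    (holes_eq_empty_of_convex (convex_closedBall x R)) hα hgood
  exact key.trans <| div_le_div_of_nonneg_right
    (volume_real_inter_closedBall_le _ x (hR₀.le.trans hR.1) hR.2) hα.le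
end

section
/- Fix a bounded Borel set Δ ⊆ ℝ². For α > 0, ε > 0 and a configuration ω all of whose germs lie in Δ, define Bad(ω, α, ε) as the set of points x ∈ ℝ² for which there exists R ∈ [R₀, R₀ + ε] such that ω̄ ∩ B̄(x,R) is nonempty and has at least one connected component of two-dimensional Lebesgue measure at most α. Then for every δ > 0 there exist α > 0 and ε > 0 such that λ(Bad(ω, α, ε)) ≤ δ for every configuration ω with all germs in Δ; i.e., the area of the bad set tends to 0 as α and ε tend to 0, uniformly over such configurations. -/
open Metric Set MeasureTheory

/-- The bad set: points `x` for which some radius `R ∈ [R₀, R₀ + ε]` makes the couple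
`(x, R)` not good, i.e. `ω̄ ∩ B̄(x,R)` is nonempty and has a connected component of
Lebesgue measure at most `α`. -/
def badSet (R₀ : ℝ) (ω : Finset (EuclideanSpace ℝ (Fin 2) × ℝ)) (α ε : ℝ) :
    Set (EuclideanSpace ℝ (Fin 2)) :=
  {x | ∃ R ∈ Set.Icc R₀ (R₀ + ε),
    (surface ω ∩ Metric.closedBall x R).Nonempty ∧
    ∃ C, IsCompOf C (surface ω ∩ Metric.closedBall x R) ∧ volume C ≤ ENNReal.ofReal α}

/-! A compactness argument. Were the claim false, there would be configurations `ω n` and bad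
points `x n` for `α = ε = 1 / (n + 1)`, the latter avoiding any prescribed open set of small
measure. Pass to the limit along an ultrafilter. A component containing `z` contains the whole
lens `closedBall q.1 q.2 ∩ closedBall x R` of every grain `q` covering `z`, so in the limit all
these lenses are null. Hence the `R₀`-ball about the limit point `x` touches a limit grain from
outside, at a point `z` which lies outside the union `U` of all open limit grains.

Thus `x` is obtained by moving `z ∈ Uᶜ` a distance `R₀` against an inner normal `u`, where `U`
contains a ball touching `Uᶜ` at `z` in the direction `u`. Such pairs `(z, u)` form a Lipschitz
image of part of the level set `{y | infDist y Uᶜ = t}`, for `t` well below the radius of the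
ball, and all but countably many of these level sets are null. Hence the limit bad points form a
null set, determined by `ω` before the `x n` are chosen. -/

open Filter Topology
open scoped ENNReal RealInnerProductSpace

lemma exists_measure_infDist_eq_zero {X : Type*} [PseudoMetricSpace X] [MeasurableSpace X]
    [OpensMeasurableSpace X] (μ : Measure X) [SFinite μ] (F : Set X) {r : ℝ} (hr : 0 < r) :
    ∃ t ∈ Ioo 0 r, μ {x | infDist x F = t} = 0 := by
  have hcount : {t : ℝ | 0 < μ {x | infDist x F = t}}.Countable :=
    Measure.countable_meas_level_set_pos (continuous_infDist_pt F).measurable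
  obtain ⟨t, ht, ht'⟩ :=
    (hcount.dense_compl ℝ).exists_mem_open isOpen_Ioo (nonempty_Ioo.2 hr)
  exact ⟨t, ht', by simpa using ht⟩

section NormedSpace

variable {E : Type*} [NormedAddCommGroup E] [NormedSpace ℝ E] {F : Set E}

/-- The bundle of unit proximal normals to `F` of reach at least `r`: pairs `(z, u)` of a point
`z ∈ F` and a unit vector `u` such that the open ball of radius `r` touching `F` at `z` in the
direction `u` misses `F`. -/
def proximalNormals (F : Set E) (r : ℝ) : Set (E × E) :=
  {n | n.1 ∈ F ∧ ‖n.2‖ = 1 ∧ Disjoint (ball (n.1 + r • n.2) r) F}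

lemma infDist_add_smul_of_mem_proximalNormals {n : E × E} {r t : ℝ} (ht : 0 ≤ t) (htr : t ≤ r)
    (hn : n ∈ proximalNormals F r) : infDist (n.1 + t • n.2) F = t := by
  obtain ⟨hz, hu, hdisj⟩ := hn
  refine le_antisymm ?_ ((le_infDist ⟨_, hz⟩).2 fun w hw => ?_)
  · refine (infDist_le_dist_of_mem hz).trans_eq ?_
    rw [dist_eq_norm, add_sub_cancel_left, norm_smul, hu, mul_one, Real.norm_of_nonneg ht]
  · by_contra! hlt
    refine disjoint_right.1 hdisj hw (ball_subset_ball' ?_ (mem_ball'.2 hlt))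
    rw [dist_eq_norm, add_sub_add_left_eq_sub, ← sub_smul, norm_smul, hu, mul_one,
      Real.norm_of_nonpos (by linarith)]
    linarith

variable [StrictConvexSpace ℝ E] {x y z : E} {R r ρ : ℝ}

lemma exists_unit_normal_of_disjoint_ball (hr : 0 < r) (hR : 0 < R)
    (hdisj : Disjoint (ball y r) (ball x R)) (hzy : z ∈ closedBall y r)
    (hzx : z ∈ closedBall x R) : ∃ u : E, ‖u‖ = 1 ∧ y = z + r • u ∧ x = z - R • u := by
  have hsum : 0 < r + R := add_pos hr hR
  have hge : r + R ≤ dist y x := (disjoint_ball_ball_iff hr hR).1 hdisj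
  have htri := dist_triangle y z x
  rw [mem_closedBall] at hzx
  rw [mem_closedBall'] at hzy
  have hyx : dist y x = r + R := by linarith
  have hz : z = AffineMap.lineMap y x (r / (r + R)) := by
    apply eq_lineMap_of_dist_eq_mul_of_dist_eq_mul <;> rw [hyx] <;> field_simp <;> linarith
  refine ⟨(r + R)⁻¹ • (y - x), ?_, ?_, ?_⟩
  · rw [norm_smul, ← dist_eq_norm, hyx, norm_inv, Real.norm_of_nonneg hsum.le,
      inv_mul_cancel₀ hsum.ne']
  · rw [hz, AffineMap.lineMap_apply_module']
    module
  · rw [hz, AffineMap.lineMap_apply_module']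
    match_scalars <;> field_simp <;> ring

lemma mem_image_proximalNormals_of_disjoint_ball (hρ : 0 < ρ) (hρr : ρ ≤ r) (hR : 0 < R)
    (hdisj : Disjoint (ball y r) (ball x R)) (hzy : z ∈ closedBall y r)
    (hzx : z ∈ closedBall x R) (hzF : z ∈ F) (hyF : Disjoint (ball y r) F) :
    x ∈ (fun n : E × E => n.1 + (-R) • n.2) '' proximalNormals F ρ := by
  obtain ⟨u, hu, rfl, rfl⟩ :=
    exists_unit_normal_of_disjoint_ball (hρ.trans_le hρr) hR hdisj hzy hzx
  refine ⟨(z, u), ⟨hzF, hu, hyF.mono_left (ball_subset_ball' ?_)⟩, by module⟩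
  rw [dist_eq_norm, add_sub_add_left_eq_sub, ← sub_smul, norm_smul, hu, mul_one,
    Real.norm_of_nonpos (by linarith)]
  linarith

end NormedSpace

section InnerProductSpace

variable {E : Type*} [NormedAddCommGroup E] [InnerProductSpace ℝ E] {F : Set E} {r t : ℝ}

lemma two_mul_inner_le_norm_sq_of_mem_proximalNormals {n : E × E} {w : E}
    (hr : 0 ≤ r) (hn : n ∈ proximalNormals F r) (hw : w ∈ F) :
    2 * r * ⟪w - n.1, n.2⟫ ≤ ‖w - n.1‖ ^ 2 := by
  obtain ⟨-, hu, hdisj⟩ := hn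
  have hdist : r ≤ ‖(w - n.1) - r • n.2‖ := by
    by_contra! hlt
    refine disjoint_right.1 hdisj hw ?_
    rwa [mem_ball, dist_eq_norm, ← sub_sub]
  have hsq := pow_le_pow_left₀ hr hdist 2
  rw [norm_sub_sq_real, real_inner_smul_right, norm_smul, hu, mul_one, Real.norm_eq_abs,
    sq_abs] at hsq
  linarith

lemma neg_norm_sq_le_inner_of_mem_proximalNormals {m n : E × E} (hr : 0 ≤ r)
    (hm : m ∈ proximalNormals F r) (hn : n ∈ proximalNormals F r) :
    -‖m.1 - n.1‖ ^ 2 ≤ r * ⟪m.1 - n.1, m.2 - n.2⟫ := by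
  have h₁ := two_mul_inner_le_norm_sq_of_mem_proximalNormals hr hn hm.1
  have h₂ := two_mul_inner_le_norm_sq_of_mem_proximalNormals hr hm hn.1
  rw [← neg_sub, norm_neg, inner_neg_left] at h₂
  rw [inner_sub_right]
  linarith

lemma norm_sq_add_norm_sq_le_of_mem_proximalNormals {m n : E × E} (ht : 0 ≤ t) (htr : 4 * t ≤ r)
    (hm : m ∈ proximalNormals F r) (hn : n ∈ proximalNormals F r) :
    ‖m.1 - n.1‖ ^ 2 / 2 + t ^ 2 * ‖m.2 - n.2‖ ^ 2 ≤
      ‖(m.1 + t • m.2) - (n.1 + t • n.2)‖ ^ 2 := by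
  have hmono := neg_norm_sq_le_inner_of_mem_proximalNormals (by linarith) hm hn
  have hcross : -‖m.1 - n.1‖ ^ 2 / 4 ≤ t * ⟪m.1 - n.1, m.2 - n.2⟫ := by
    rcases le_total 0 ⟪m.1 - n.1, m.2 - n.2⟫ with h | h
    · nlinarith [mul_nonneg ht h, sq_nonneg ‖m.1 - n.1‖]
    · nlinarith [mul_nonneg_of_nonpos_of_nonpos (sub_nonpos.2 htr) h]
  have hsplit : (m.1 + t • m.2) - (n.1 + t • n.2) = (m.1 - n.1) + t • (m.2 - n.2) := by module
  rw [hsplit, norm_add_sq_real, real_inner_smul_right, norm_smul, mul_pow, Real.norm_eq_abs, sq_abs]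
  linarith

lemma antilipschitzWith_proximalNormals (ht : 0 < t) (htr : 4 * t ≤ r) :
    AntilipschitzWith (max 2 t⁻¹).toNNReal
      fun n : proximalNormals F r => n.1.1 + t • n.1.2 := by
  refine AntilipschitzWith.of_le_mul_dist fun ⟨m, hm⟩ ⟨n, hn⟩ => ?_
  rw [Real.coe_toNNReal _ (by positivity), Subtype.dist_eq, Prod.dist_eq, dist_eq_norm,
    dist_eq_norm, dist_eq_norm]
  have hsq := norm_sq_add_norm_sq_le_of_mem_proximalNormals ht.le htr hm hn
  set D := ‖(m.1 + t • m.2) - (n.1 + t • n.2)‖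
  have hbase : ‖m.1 - n.1‖ ≤ 2 * D :=
    le_of_sq_le_sq (by nlinarith [sq_nonneg (t * ‖m.2 - n.2‖)]) (by positivity)
  have hnormal : t * ‖m.2 - n.2‖ ≤ D :=
    le_of_sq_le_sq (by nlinarith [sq_nonneg ‖m.1 - n.1‖]) (by positivity)
  refine max_le (hbase.trans ?_) (((le_inv_mul_iff₀ ht).2 hnormal).trans ?_)
  · gcongr; exact le_max_left _ _
  · gcongr; exact le_max_right _ _

variable [FiniteDimensional ℝ E] [MeasurableSpace E] [BorelSpace E]
  (μ : Measure E) [μ.IsAddHaarMeasure]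

theorem measure_image_proximalNormals_eq_zero (F : Set E) (hr : 0 < r) (s : ℝ) :
    μ ((fun n : E × E => n.1 + s • n.2) '' proximalNormals F r) = 0 := by
  set d : ℕ := Module.finrank ℝ E
  obtain ⟨t, ⟨ht, htr⟩, hnull⟩ :=
    exists_measure_infDist_eq_zero (μH[d] : Measure E) F (show 0 < r / 4 by linarith)
  have hlevel : range (fun n : proximalNormals F r => n.1.1 + t • n.1.2) ⊆
      {x | infDist x F = t} := by
    rintro _ ⟨n, rfl⟩
    exact infDist_add_smul_of_mem_proximalNormals ht.le (by linarith) n.2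
  have hbundle : μH[d] (univ : Set (proximalNormals F r)) = 0 := by
    have h := (antilipschitzWith_proximalNormals (F := F) (r := r) ht
      (by linarith)).le_hausdorffMeasure_image (Nat.cast_nonneg d) univ
    rw [image_univ, measure_mono_null hlevel hnull, mul_zero] at h
    exact le_antisymm h zero_le
  have hLip : LipschitzWith (1 + ‖s‖₊ * 1) fun n : E × E => n.1 + s • n.2 :=
    LipschitzWith.prod_fst.add ((lipschitzWith_smul s).comp LipschitzWith.prod_snd)
  have himage : μH[d] ((fun n : E × E => n.1 + s • n.2) '' proximalNormals F r) = 0 := by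
    have h := (hLip.comp (LipschitzWith.subtype_val _)).hausdorffMeasure_image_le
      (Nat.cast_nonneg d) (univ : Set (proximalNormals F r))
    rw [image_comp, image_univ, Subtype.range_coe, hbundle, mul_zero] at h
    exact le_antisymm h zero_le
  exact Measure.absolutelyContinuous_isAddHaarMeasure μ μH[d] himage

end InnerProductSpace

section Limits

variable {ι X : Type*}

lemma exists_tendsto_of_isBounded [PseudoMetricSpace X] [ProperSpace X] {s : Set X}
    (hs : Bornology.IsBounded s) (𝒰 : Ultrafilter ι) {u : ι → X} (hu : ∀ i, u i ∈ s) :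
    ∃ x, Tendsto u 𝒰 (𝓝 x) := by
  obtain ⟨x, -, hx⟩ := hs.isCompact_closure.ultrafilter_le_nhds (𝒰.map u)
    (tendsto_principal.2 (.of_forall fun i => subset_closure (hu i)))
  exact ⟨x, hx⟩

/-- The lower limit, in the sense of Kuratowski, of a family of sets along a filter: all limits of
families of points picked from the sets. -/
def lowerLimit [TopologicalSpace X] (l : Filter ι) (ω : ι → Set X) : Set X :=
  {p | ∃ u : ι → X, (∀ i, u i ∈ ω i) ∧ Tendsto u l (𝓝 p)}

lemma disjoint_ball_of_tendsto_measure_inter [PseudoMetricSpace X] [MeasurableSpace X]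
    {μ : Measure X} [μ.IsOpenPosMeasure] {l : Filter ι} [l.NeBot] {x y : ι → X} {R r : ι → ℝ}
    {x₀ y₀ : X} {R₀ r₀ : ℝ} (hx : Tendsto x l (𝓝 x₀)) (hR : Tendsto R l (𝓝 R₀))
    (hy : Tendsto y l (𝓝 y₀)) (hr : Tendsto r l (𝓝 r₀))
    (hμ : Tendsto (fun i => μ (closedBall (y i) (r i) ∩ closedBall (x i) (R i))) l (𝓝 0)) :
    Disjoint (ball y₀ r₀) (ball x₀ R₀) := by
  refine disjoint_left.2 fun w hwy hwx => ?_
  have eventually_mem {c : ι → X} {ϱ : ι → ℝ} {c₀ : X} {ϱ₀ : ℝ} (hc : Tendsto c l (𝓝 c₀))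
      (hϱ : Tendsto ϱ l (𝓝 ϱ₀)) (hw : w ∈ ball c₀ ϱ₀) :
      ∀ᶠ p : ι × X in l ×ˢ 𝓝 w, p.2 ∈ closedBall (c p.1) (ϱ p.1) :=
    ((tendsto_snd.dist (hc.comp tendsto_fst)).eventually_lt (hϱ.comp tendsto_fst) hw).mono
      fun _ h => h.le
  obtain ⟨S, hS, V, hV, hSV⟩ :=
    mem_prod_iff.1 ((eventually_mem hy hr hwy).and (eventually_mem hx hR hwx))
  have hle : ∀ᶠ i in l, μ V ≤ μ (closedBall (y i) (r i) ∩ closedBall (x i) (R i)) :=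
    mem_of_superset hS fun i hi => measure_mono fun v hv => hSV (mk_mem_prod hi hv)
  exact (Measure.measure_pos_of_mem_nhds μ hV).not_ge (ge_of_tendsto hμ hle)

end Limits

section GermGrain

variable {X : Type*} [PseudoMetricSpace X]

/-- The germ-grain surface of an arbitrary, possibly infinite set of grains, given by their centres
and radii. -/
def grainUnion (ω : Set (X × ℝ)) : Set X :=
  ⋃ p ∈ ω, closedBall p.1 p.2

/-- The centres `x` of balls of some radius `R ∈ [R₀, R₀ + ε]` whose intersection with the
germ-grain surface of `ω` has a component of `μ`-measure at most `α`: the bad set, for an arbitrary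
set of grains. -/
def badCenters [MeasurableSpace X] (μ : Measure X) (R₀ : ℝ) (ω : Set (X × ℝ)) (α ε : ℝ) : Set X :=
  {x | ∃ R ∈ Icc R₀ (R₀ + ε), ∃ z ∈ grainUnion ω ∩ closedBall x R,
    μ (connectedComponentIn (grainUnion ω ∩ closedBall x R) z) ≤ ENNReal.ofReal α}

lemma badCenters_subset_cthickening [MeasurableSpace X] {μ : Measure X} {R₀ R₁ α ε : ℝ} {Δ : Set X}
    {ω : Set (X × ℝ)} (hω : ω ⊆ Δ ×ˢ Iic R₁) :
    badCenters μ R₀ ω α ε ⊆ cthickening (R₁ + (R₀ + ε)) Δ := by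
  rintro x ⟨R, ⟨-, hR⟩, z, ⟨hzω, hzx⟩, -⟩
  obtain ⟨p, hp, hzp⟩ := mem_iUnion₂.1 hzω
  obtain ⟨hpΔ, hpR⟩ := hω hp
  refine mem_cthickening_of_dist_le x p.1 _ _ hpΔ ?_
  rw [mem_closedBall] at hzp
  rw [mem_closedBall'] at hzx
  linarith [dist_triangle x z p.1, mem_Iic.1 hpR]

variable {E : Type*} [NormedAddCommGroup E] [NormedSpace ℝ E]

lemma inter_closedBall_subset_connectedComponentIn {ω : Set (E × ℝ)} {q : E × ℝ} {x z : E} {R : ℝ}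
    (hq : q ∈ ω) (hz : z ∈ closedBall q.1 q.2 ∩ closedBall x R) :
    closedBall q.1 q.2 ∩ closedBall x R ⊆
      connectedComponentIn (grainUnion ω ∩ closedBall x R) z :=
  ((convex_closedBall _ _).inter (convex_closedBall _ _)).isPreconnected.subset_connectedComponentIn
    hz (inter_subset_inter_left _
      (subset_biUnion_of_mem (u := fun q : E × ℝ => closedBall q.1 q.2) hq))

variable [MeasurableSpace E] {μ : Measure E} {R₀ R₁ ρ : ℝ} {Δ : Set E}

lemma exists_thin_contact_of_mem_badCenters {ω : Set (E × ℝ)} {x : E} {α ε : ℝ}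
    (hx : x ∈ badCenters μ R₀ ω α ε) :
    ∃ R ∈ Icc R₀ (R₀ + ε), ∃ p ∈ ω, ∃ z ∈ closedBall p.1 p.2 ∩ closedBall x R,
      ∀ q ∈ ω, z ∈ closedBall q.1 q.2 →
        μ (closedBall q.1 q.2 ∩ closedBall x R) ≤ ENNReal.ofReal α := by
  obtain ⟨R, hR, z, ⟨hzω, hzx⟩, hμ⟩ := hx
  obtain ⟨p, hp, hzp⟩ := mem_iUnion₂.1 hzω
  exact ⟨R, hR, p, hp, z, ⟨hzp, hzx⟩, fun q hq hzq =>
    (measure_mono (inter_closedBall_subset_connectedComponentIn hq ⟨hzq, hzx⟩)).trans hμ⟩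

theorem mem_image_proximalNormals_of_tendsto_thin_contact [StrictConvexSpace ℝ E]
    [μ.IsOpenPosMeasure] {ι : Type*} {l : Filter ι} [l.NeBot] {ω : ι → Set (E × ℝ)}
    {p : ι → E × ℝ} {x z : ι → E} {R : ι → ℝ} {a : ι → ℝ≥0∞} {p₀ : E × ℝ} {x₀ z₀ : E}
    (hρ : 0 < ρ) (hR₀ : 0 < R₀) (hp : ∀ i, p i ∈ ω i) (hpρ : ∀ i, ρ ≤ (p i).2)
    (hz : ∀ i, z i ∈ closedBall (p i).1 (p i).2 ∩ closedBall (x i) (R i))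
    (hthin : ∀ i, ∀ q ∈ ω i, z i ∈ closedBall q.1 q.2 →
      μ (closedBall q.1 q.2 ∩ closedBall (x i) (R i)) ≤ a i)
    (hp₀ : Tendsto p l (𝓝 p₀)) (hx₀ : Tendsto x l (𝓝 x₀)) (hz₀ : Tendsto z l (𝓝 z₀))
    (hR : Tendsto R l (𝓝 R₀)) (ha : Tendsto a l (𝓝 0)) :
    x₀ ∈ (fun n : E × E => n.1 + (-R₀) • n.2) ''
      proximalNormals (⋃ q ∈ lowerLimit l ω, ball q.1 q.2)ᶜ ρ := by
  have disjoint_of_cover {q : E × ℝ} {u : ι → E × ℝ} (hu : ∀ i, u i ∈ ω i)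
      (hu_lim : Tendsto u l (𝓝 q)) (hzu : ∀ᶠ i in l, z i ∈ closedBall (u i).1 (u i).2) :
      Disjoint (ball q.1 q.2) (ball x₀ R₀) :=
    disjoint_ball_of_tendsto_measure_inter hx₀ hR hu_lim.fst_nhds hu_lim.snd_nhds
      (tendsto_of_tendsto_of_tendsto_of_le_of_le' tendsto_const_nhds ha
        (.of_forall fun _ => zero_le) (hzu.mono fun i => hthin i _ (hu i)))
  have hzp : z₀ ∈ closedBall p₀.1 p₀.2 :=
    le_of_tendsto_of_tendsto' (hz₀.dist hp₀.fst_nhds) hp₀.snd_nhds fun i => (hz i).1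
  have hzx : z₀ ∈ closedBall x₀ R₀ :=
    le_of_tendsto_of_tendsto' (hz₀.dist hx₀) hR fun i => (hz i).2
  have hzU : z₀ ∉ ⋃ q ∈ lowerLimit l ω, ball q.1 q.2 := by
    intro hmem
    obtain ⟨q, ⟨u, hu, hu_lim⟩, hzq⟩ := mem_iUnion₂.1 hmem
    have hcover : ∀ᶠ i in l, z i ∈ closedBall (u i).1 (u i).2 :=
      ((hz₀.dist hu_lim.fst_nhds).eventually_lt hu_lim.snd_nhds hzq).mono fun _ h => h.le
    have hdisj := (disjoint_of_cover hu hu_lim hcover).closure_right isOpen_ball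
    rw [closure_ball x₀ hR₀.ne'] at hdisj
    exact disjoint_left.1 hdisj hzq hzx
  have hpU : ball p₀.1 p₀.2 ⊆ ⋃ q ∈ lowerLimit l ω, ball q.1 q.2 :=
    subset_biUnion_of_mem (u := fun q : E × ℝ => ball q.1 q.2) ⟨p, hp, hp₀⟩
  exact mem_image_proximalNormals_of_disjoint_ball hρ (ge_of_tendsto' hp₀.snd_nhds hpρ) hR₀
    (disjoint_of_cover hp hp₀ (.of_forall fun i => (hz i).1)) hzp hzx hzU
    (disjoint_compl_right.mono_left hpU)

theorem mem_image_proximalNormals_of_tendsto_badCenters [FiniteDimensional ℝ E]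
    [StrictConvexSpace ℝ E] [μ.IsOpenPosMeasure] {ι : Type*} (𝒰 : Ultrafilter ι)
    {ω : ι → Set (E × ℝ)} {α ε : ι → ℝ} {x : ι → E} {x₀ : E} (hρ : 0 < ρ) (hR₀ : 0 < R₀)
    (hΔ : Bornology.IsBounded Δ) (hω : ∀ i, ω i ⊆ Δ ×ˢ Icc ρ R₁)
    (hα : Tendsto α 𝒰 (𝓝 0)) (hε : Tendsto ε 𝒰 (𝓝 0))
    (hx : ∀ i, x i ∈ badCenters μ R₀ (ω i) (α i) (ε i)) (hx₀ : Tendsto x 𝒰 (𝓝 x₀)) :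
    x₀ ∈ (fun n : E × E => n.1 + (-R₀) • n.2) ''
      proximalNormals (⋃ p ∈ lowerLimit 𝒰 ω, ball p.1 p.2)ᶜ ρ := by
  choose R hR p hp z hz hthin using fun i => exists_thin_contact_of_mem_badCenters (hx i)
  have hR_lim : Tendsto R 𝒰 (𝓝 R₀) :=
    tendsto_of_tendsto_of_tendsto_of_le_of_le tendsto_const_nhds
      (by simpa using tendsto_const_nhds.add hε) (fun i => (hR i).1) fun i => (hR i).2
  obtain ⟨p₀, hp₀⟩ := exists_tendsto_of_isBounded
    (hΔ.prod (isBounded_Icc ρ R₁)) 𝒰 fun i => hω i (hp i)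
  have hz_bdd (i : ι) : z i ∈ cthickening R₁ Δ :=
    mem_cthickening_of_dist_le (z i) (p i).1 R₁ Δ (hω i (hp i)).1
      (le_trans (hz i).1 (hω i (hp i)).2.2)
  obtain ⟨z₀, hz₀⟩ := exists_tendsto_of_isBounded hΔ.cthickening 𝒰 hz_bdd
  have hα' : Tendsto (fun i => ENNReal.ofReal (α i)) 𝒰 (𝓝 0) := by
    simpa using ENNReal.tendsto_ofReal hα
  exact mem_image_proximalNormals_of_tendsto_thin_contact hρ hR₀ hp
    (fun i => (hω i (hp i)).2.1) hz hthin hp₀ hx₀ hz₀ hR_lim hα'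

end GermGrain

theorem stmt_9_general {E : Type*} [NormedAddCommGroup E] [InnerProductSpace ℝ E]
    [FiniteDimensional ℝ E] [MeasurableSpace E] [BorelSpace E] (μ : Measure E) [μ.IsAddHaarMeasure]
    (R₀ R₁ ρ : ℝ) (hR₀ : 0 < R₀) (hρ : 0 < ρ) (Δ : Set E) (hΔ : Bornology.IsBounded Δ)
    (δ : ℝ) (hδ : 0 < δ) :
    ∃ α > (0 : ℝ), ∃ ε > (0 : ℝ), ∀ ω : Set (E × ℝ), ω ⊆ Δ ×ˢ Icc ρ R₁ →
      μ (badCenters μ R₀ ω α ε) ≤ ENNReal.ofReal δ := by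
  by_contra! hcon
  have η_pos (n : ℕ) : (0 : ℝ) < 1 / (n + 1) := by positivity
  choose ω hω hlarge using fun n : ℕ => hcon _ (η_pos n) _ (η_pos n)
  let 𝒰 : Ultrafilter ℕ := hyperfilter ℕ
  have hη : Tendsto (fun n : ℕ => (1 : ℝ) / (n + 1)) 𝒰 (𝓝 0) :=
    tendsto_one_div_add_atTop_nhds_zero_nat.mono_left Nat.hyperfilter_le_atTop
  obtain ⟨O, hO, hO_open, hμO⟩ := exists_isOpen_lt_of_lt _ (ENNReal.ofReal δ)
    ((measure_image_proximalNormals_eq_zero μ (⋃ p ∈ lowerLimit 𝒰 ω, ball p.1 p.2)ᶜ hρ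
      (-R₀)).trans_lt (ENNReal.ofReal_pos.2 hδ))
  have hout (n : ℕ) : ∃ x ∈ badCenters μ R₀ (ω n) (1 / (n + 1)) (1 / (n + 1)), x ∉ O :=
    not_subset.1 fun hsub => (hlarge n).not_ge ((measure_mono hsub).trans hμO.le)
  choose x hx hxO using hout
  have hx_bdd (n : ℕ) : x n ∈ cthickening (R₁ + (R₀ + 1)) Δ :=
    cthickening_mono (by gcongr; exact div_le_one_of_le₀ (by simp) (by positivity)) Δ
      (badCenters_subset_cthickening ((hω n).trans (prod_mono_right fun _ h => h.2)) (hx n))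
  obtain ⟨x₀, hx₀⟩ := exists_tendsto_of_isBounded hΔ.cthickening 𝒰 hx_bdd
  exact hO_open.isClosed_compl.mem_of_tendsto hx₀ (.of_forall hxO)
    (hO (mem_image_proximalNormals_of_tendsto_badCenters 𝒰 hρ hR₀ hΔ hω hη hη hx hx₀))

theorem stmt_9 (R₀ R₁ : ℝ) (hR₀ : 0 < R₀) (hR₀₁ : R₀ ≤ R₁)
    (Δ : Set (EuclideanSpace ℝ (Fin 2)))
    (hΔb : Bornology.IsBounded Δ) (hΔm : MeasurableSet Δ)
    (δ : ℝ) (hδ : 0 < δ) :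
    ∃ α > (0 : ℝ), ∃ ε > (0 : ℝ),
      ∀ ω : Finset (EuclideanSpace ℝ (Fin 2) × ℝ),
        (∀ p ∈ ω, p.2 ∈ Set.Icc R₀ R₁) → (∀ p ∈ ω, p.1 ∈ Δ) →
        volume (badSet R₀ ω α ε) ≤ ENNReal.ofReal δ := by
  obtain ⟨α, hα, ε, hε, hbad⟩ := stmt_9_general volume R₀ R₁ R₀ hR₀ hR₀ Δ hΔb δ hδ
  refine ⟨α, hα, ε, hε, fun ω hR hy =>
    (measure_mono ?_).trans (hbad ω fun p hp => ⟨hy p hp, hR p hp⟩)⟩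
  rintro x ⟨R, hxR, -, _, ⟨z, hz, rfl⟩, hvol⟩
  exact ⟨R, hxR, z, hz, hvol⟩
end
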